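/- arXiv:2306.09146 — 2 statements merged into one kernel-verified Lean document; each statement's English description precedes it below -/
import Mathlib

section
/- Let G be a basic CUH graph that omits D and in which at least one color class does not form an independent set, and assume ω_R = ℵ₀. Then for all natural numbers r and k with k ≤ α_B, the join of a red r-clique with a blue independent set of size k (all rk cross edges present) and its cross-edge complement (the disjoint union, with no cross edges) are both realized in G. -/
open SimpleGraph

/-- A partial colored isomorphism of the 2-colored graph `(G, red)`, defined on the set `S`:
an injective map preserving colors and adjacency on `S`. -/
def IsPartialIso {V : Type} (G : SimpleGraph V) (red : V → Prop) (S : Set V) (f : V → V) :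
    Prop :=
  Set.InjOn f S ∧ (∀ v ∈ S, (red (f v) ↔ red v)) ∧
    ∀ u ∈ S, ∀ v ∈ S, (G.Adj (f u) (f v) ↔ G.Adj u v)

/-- A 2-colored graph is ultrahomogeneous if every isomorphism between two finite induced
colored subgraphs extends to a color-preserving automorphism. -/
def Ultrahomogeneous {V : Type} (G : SimpleGraph V) (red : V → Prop) : Prop :=
  ∀ S : Set V, S.Finite → ∀ f : V → V, IsPartialIso G red S f →
    ∃ ψ : G ≃g G, (∀ v, red (ψ v) ↔ red v) ∧ ∀ v ∈ S, ψ v = f v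

/-- The set `P` induces a disjoint union of cliques in `G` (no induced monochromatic `P₃`). -/
def IsUnionOfCliques {V : Type} (G : SimpleGraph V) (P : Set V) : Prop :=
  ∀ u ∈ P, ∀ v ∈ P, ∀ w ∈ P, G.Adj u v → G.Adj v w → u ≠ w → G.Adj u w

/-- `M` is an inclusion-wise maximal clique of the subgraph of `G` induced on `P`. -/
def IsMaxCliqueIn {V : Type} (G : SimpleGraph V) (P : Set V) (M : Set V) : Prop :=
  M ⊆ P ∧ G.IsClique M ∧ ∀ M' : Set V, M' ⊆ P → G.IsClique M' → M ⊆ M' → M = M'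

/-- `S` is an independent set in `G`. -/
def IsIndepIn {V : Type} (G : SimpleGraph V) (S : Set V) : Prop :=
  ∀ u ∈ S, ∀ v ∈ S, ¬ G.Adj u v

/-- The 2-colored graph `(H, redH)` is realized in `(G, red)`, i.e. isomorphic to an
induced colored subgraph of `G`. -/
def Realizes {V : Type} (G : SimpleGraph V) (red : V → Prop) {W : Type} (H : SimpleGraph W)
    (redH : W → Prop) : Prop :=
  ∃ f : W → V, Function.Injective f ∧ (∀ w, red (f w) ↔ redH w) ∧
    ∀ u w : W, G.Adj (f u) (f w) ↔ H.Adj u w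

/-- `(H, redH)` is minimally omitted in `(G, red)`: it is omitted, but every proper induced
subgraph of it is realized. -/
def MinOmitted {V : Type} (G : SimpleGraph V) (red : V → Prop) {W : Type} (H : SimpleGraph W)
    (redH : W → Prop) : Prop :=
  ¬ Realizes G red H redH ∧
    ∀ S : Set W, S ≠ Set.univ → Realizes G red (H.induce S) (fun x => redH x.1)

/-- Isomorphism of 2-colored graphs. -/
def ColoredIso {V : Type} (G : SimpleGraph V) (red : V → Prop) {W : Type} (H : SimpleGraph W)
    (redH : W → Prop) : Prop :=
  ∃ e : G ≃g H, ∀ v, red v ↔ redH (e v)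

/-- The graph obtained from `G` by complementing the cross edges while keeping the
edges inside each color class. -/
def crossComp {V : Type} (G : SimpleGraph V) (red : V → Prop) : SimpleGraph V :=
  SimpleGraph.fromRel (fun u v =>
    ((red u ↔ red v) ∧ G.Adj u v) ∨ (¬ (red u ↔ red v) ∧ ¬ G.Adj u v))

/-- The blow-up of the 2-colored graph `(H, redH)` (whose red class should be independent),
replacing every red vertex by a copy of `I` forming a clique, joined to the neighbors of the
original vertex. -/
def blowUp {V : Type} (H : SimpleGraph V) (redH : V → Prop) (I : Type) :
    SimpleGraph ({v : V // redH v} × I ⊕ {v : V // ¬ redH v}) :=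
  SimpleGraph.fromRel (fun x y =>
    match x, y with
    | Sum.inl (u, i), Sum.inl (u', i') => H.Adj u.1 u'.1 ∨ (u = u' ∧ i ≠ i')
    | Sum.inl (u, _), Sum.inr b => H.Adj u.1 b.1
    | Sum.inr b, Sum.inl (u, _) => H.Adj b.1 u.1
    | Sum.inr b, Sum.inr b' => H.Adj b.1 b'.1)

/-- The coloring of the blow-up: all vertices replacing red vertices are red. -/
def blowUpRed (V : Type) (redH : V → Prop) (I : Type) :
    ({v : V // redH v} × I ⊕ {v : V // ¬ redH v}) → Prop :=
  Sum.elim (fun _ => True) (fun _ => False)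

/-- `(G, red)` is a blow-up with the red class blown up: it is isomorphic (as a colored graph)
to the blow-up of some `(H, redH)` with independent red class by an `i`-clique, `2 ≤ i ≤ ℵ₀`. -/
def IsBlowUpOf {V : Type} (G : SimpleGraph V) (red : V → Prop) : Prop :=
  ∃ (U : Type) (H : SimpleGraph U) (redH : U → Prop) (I : Type),
    (∀ u v : U, redH u → redH v → ¬ H.Adj u v) ∧
    2 ≤ Cardinal.mk I ∧ Cardinal.mk I ≤ Cardinal.aleph0 ∧
    ∃ e : G ≃g blowUp H redH I, ∀ v, red v ↔ blowUpRed U redH I (e v)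

/-- `(G, red)` is a blow-up (of one of its two color classes). -/
def IsBlowUp {V : Type} (G : SimpleGraph V) (red : V → Prop) : Prop :=
  IsBlowUpOf G red ∨ IsBlowUpOf G (fun v => ¬ red v)

/-- A CUH graph: a countably infinite ultrahomogeneous 2-colored graph in which both
color classes induce disjoint unions of cliques. -/
def IsCUH {V : Type} (G : SimpleGraph V) (red : V → Prop) : Prop :=
  Countable V ∧ Infinite V ∧ Ultrahomogeneous G red ∧
    IsUnionOfCliques G {v | red v} ∧ IsUnionOfCliques G {v | ¬ red v}

/-- A basic CUH graph: a CUH graph which is not a blow-up and where both independence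
numbers are at least 2. -/
def IsBasicCUH {V : Type} (G : SimpleGraph V) (red : V → Prop) : Prop :=
  IsCUH G red ∧ ¬ IsBlowUp G red ∧
    (∃ u v, red u ∧ red v ∧ u ≠ v ∧ ¬ G.Adj u v) ∧
    (∃ u v, ¬ red u ∧ ¬ red v ∧ u ≠ v ∧ ¬ G.Adj u v)

/-- The graph `D`: red vertices `0, 1`, blue vertices `2, 3`, edges
`{01, 23, 02, 03, 12}` (a 2-colored diamond). -/
def Dgraph : SimpleGraph (Fin 4) :=
  SimpleGraph.fromRel (fun x y =>
    (x = 0 ∧ y = 1) ∨ (x = 2 ∧ y = 3) ∨ (x = 0 ∧ y = 2) ∨ (x = 0 ∧ y = 3) ∨ (x = 1 ∧ y = 2))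

/-- The coloring of `D` and `D̃`: `0, 1` are red, `2, 3` are blue. -/
def Dred : Fin 4 → Prop := fun x => x = 0 ∨ x = 1

/-- The graph `D̃`, the cross-edge complement of `D`: the path `0 – 1 – 3 – 2`. -/
def Dtilde : SimpleGraph (Fin 4) :=
  SimpleGraph.fromRel (fun x y => (x = 0 ∧ y = 1) ∨ (x = 1 ∧ y = 3) ∨ (x = 3 ∧ y = 2))

/-- `T_r`: the triangle with two red vertices and one blue vertex. -/
def Tr : SimpleGraph (Fin 3) := ⊤

/-- The coloring of `T_r` and `T̃_r`: `0, 1` red, `2` blue. -/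
def TrRed : Fin 3 → Prop := fun x => x = 0 ∨ x = 1

/-- `T̃_r`: a red edge together with an isolated blue vertex. -/
def TrTilde : SimpleGraph (Fin 3) := SimpleGraph.fromRel (fun x y => x = 0 ∧ y = 1)

/-- `T_b`: the triangle with one red vertex and two blue vertices. -/
def Tb : SimpleGraph (Fin 3) := ⊤

/-- The coloring of `T_b` and `T̃_b`: `0` red, `1, 2` blue. -/
def TbRed : Fin 3 → Prop := fun x => x = 0

/-- `T̃_b`: a blue edge together with an isolated red vertex. -/
def TbTilde : SimpleGraph (Fin 3) := SimpleGraph.fromRel (fun x y => x = 1 ∧ y = 2)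

/-- The clique of the red vertex `x` among the red vertices. -/
def redClique {V : Type} (G : SimpleGraph V) (red : V → Prop) (x : V) : Set V :=
  {v | red v ∧ (v = x ∨ G.Adj x v)}

/-- Some red `n`-clique and some blue independent set of size `c` have all cross edges between
them (if `ε` holds) or no cross edges (if `ε` fails). -/
def RealizesUniform {V : Type} (G : SimpleGraph V) (red : V → Prop) (ε : Prop) (n c : ℕ) :
    Prop :=
  ∃ C S : Finset V, C.card = n ∧ S.card = c ∧ (∀ v ∈ C, red v) ∧ (∀ v ∈ S, ¬ red v) ∧
    (∀ u ∈ C, ∀ v ∈ C, u ≠ v → G.Adj u v) ∧ (∀ u ∈ S, ∀ v ∈ S, ¬ G.Adj u v) ∧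
    ∀ u ∈ C, ∀ v ∈ S, (G.Adj u v ↔ ε)

section RedCliques

variable {V : Type} {G : SimpleGraph V} {red : V → Prop}

theorem redClique_adj (hR : IsUnionOfCliques G {v | red v}) {x u v : V} (hx : red x)
    (hu : u ∈ redClique G red x) (hv : v ∈ redClique G red x) (huv : u ≠ v) : G.Adj u v := by
  obtain ⟨hur, rfl | hu⟩ := hu
  · obtain ⟨hvr, rfl | hv⟩ := hv
    · exact absurd rfl huv
    · exact hv
  · obtain ⟨hvr, rfl | hv⟩ := hv
    · exact hu.symm
    · exact hR u hur x hx v hvr hu.symm hv huv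

theorem mem_redClique_of_adj (hR : IsUnionOfCliques G {v | red v}) {x u v : V} (hx : red x)
    (hu : u ∈ redClique G red x) (hv : red v) (huv : G.Adj u v) : v ∈ redClique G red x := by
  obtain ⟨hur, rfl | hu⟩ := hu
  · exact ⟨hv, Or.inr huv⟩
  · by_cases h : x = v
    · exact ⟨hv, Or.inl h.symm⟩
    · exact ⟨hv, Or.inr (hR x hx u hur v hv hu huv h)⟩

theorem mem_redClique_self {x : V} (hx : red x) : x ∈ redClique G red x := ⟨hx, Or.inl rfl⟩

/-- A color-preserving automorphism sending one vertex of a red clique into a red clique sends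
the whole clique there. -/
theorem map_mem_redClique (hR : IsUnionOfCliques G {v | red v}) {ψ : G ≃g G}
    (hψ : ∀ v, red (ψ v) ↔ red v) {x y u v : V} (hx : red x) (hy : red y)
    (hu : u ∈ redClique G red x) (hv : v ∈ redClique G red x)
    (hψu : ψ u ∈ redClique G red y) : ψ v ∈ redClique G red y := by
  by_cases h : u = v
  · exact h ▸ hψu
  · exact mem_redClique_of_adj hR hy hψu ((hψ v).2 hv.1)
      (ψ.map_adj_iff.2 (redClique_adj hR hx hu hv h))

theorem redClique_isMaxCliqueIn (hR : IsUnionOfCliques G {v | red v}) {x : V} (hx : red x) :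
    IsMaxCliqueIn G {v | red v} (redClique G red x) := by
  refine ⟨fun v hv => hv.1, fun u hu v hv huv => redClique_adj hR hx hu hv huv, ?_⟩
  intro M hM hcl hsub
  refine hsub.antisymm fun v hv => ⟨hM hv, ?_⟩
  by_cases h : v = x
  · exact Or.inl h
  · exact Or.inr (hcl (hsub (mem_redClique_self hx)) hv (Ne.symm h))

/-- If all red cliques are countably infinite and adjacent red vertices have the same blue
neighbors, then the graph is a blow-up. -/
theorem isBlowUpOf_of_twins (hR : IsUnionOfCliques G {v | red v})
    (hω : ∀ x, red x → Cardinal.mk (redClique G red x) = Cardinal.aleph0)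
    (htw : ∀ x y b, red x → red y → ¬ red b → G.Adj x y → G.Adj x b → G.Adj y b) :
    IsBlowUpOf G red := by
  classical
  let s : Setoid V :=
    { r := fun u v => u = v ∨ (red u ∧ red v ∧ G.Adj u v)
      iseqv := by
        refine ⟨fun u => Or.inl rfl, ?_, ?_⟩
        · rintro u v (rfl | ⟨hu, hv, h⟩)
          · exact Or.inl rfl
          · exact Or.inr ⟨hv, hu, h.symm⟩
        · rintro u v w (rfl | ⟨hu, hv, h⟩) (rfl | ⟨hv', hw, h'⟩)
          · exact Or.inl rfl
          · exact Or.inr ⟨hv', hw, h'⟩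
          · exact Or.inr ⟨hu, hv, h⟩
          · by_cases huw : u = w
            · exact Or.inl huw
            · exact Or.inr ⟨hu, hw, hR u hu v hv w hw h h' huw⟩ }
  have hcls : ∀ u v : V, Quotient.mk s u = Quotient.mk s v ↔
      u = v ∨ (red u ∧ red v ∧ G.Adj u v) := fun u v => Quotient.eq
  have henum : ∀ q : {q : Quotient s // red q.out},
      Nonempty (ℕ ≃ redClique G red q.1.out) := by
    intro q
    have h := hω _ q.2
    rw [← Cardinal.mk_nat] at h
    exact (Cardinal.eq.1 h).map Equiv.symm
  let enum := fun q => Classical.choice (henum q)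
  have hmem : ∀ q i, Quotient.mk s (enum q i : V) = q.1 := by
    intro q i
    conv_rhs => rw [← Quotient.out_eq q.1]
    rw [hcls]
    obtain ⟨h1, h2 | h2⟩ := (enum q i).2
    · exact Or.inl h2
    · exact Or.inr ⟨h1, q.2, h2.symm⟩
  let g : ({q : Quotient s // red q.out} × ℕ ⊕ {q : Quotient s // ¬ red q.out}) → V :=
    Sum.elim (fun p => (enum p.1 p.2 : V)) (fun q => q.1.out)
  have hg : Function.Bijective g := by
    constructor
    · rintro (⟨q, i⟩ | q) (⟨q', i'⟩ | q') h
      · simp only [g, Sum.elim_inl] at h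
        have hq : q = q' := Subtype.ext (by rw [← hmem q i, ← hmem q' i', h])
        subst hq
        rw [(enum q).injective (Subtype.ext h)]
      · simp only [g, Sum.elim_inl, Sum.elim_inr] at h
        exact absurd (h ▸ (enum q i).2.1) q'.2
      · simp only [g, Sum.elim_inl, Sum.elim_inr] at h
        exact absurd (h ▸ (enum q' i').2.1) q.2
      · simp only [g, Sum.elim_inr] at h
        have : q = q' := Subtype.ext (by rw [← Quotient.out_eq q.1, ← Quotient.out_eq q'.1, h])
        rw [this]
    · intro v
      have hv : (Quotient.mk s v).out = v ∨ _ := (hcls _ _).1 (Quotient.out_eq (Quotient.mk s v))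
      by_cases hr : red v
      · have hq : red (Quotient.mk s v).out := by
          rcases hv with h | h
          · exact h.symm ▸ hr
          · exact h.1
        have hvm : v ∈ redClique G red (Quotient.mk s v).out := by
          rcases hv with h | h
          · exact ⟨hr, Or.inl h.symm⟩
          · exact ⟨hr, Or.inr h.2.2⟩
        obtain ⟨i, hi⟩ := (enum ⟨Quotient.mk s v, hq⟩).surjective ⟨v, hvm⟩
        exact ⟨Sum.inl (⟨Quotient.mk s v, hq⟩, i), congrArg Subtype.val hi⟩
      · have h : (Quotient.mk s v).out = v := hv.resolve_right fun h => hr h.2.1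
        exact ⟨Sum.inr ⟨Quotient.mk s v, by rwa [h]⟩, h⟩
  have hcross : ∀ (q : {q : Quotient s // red q.out}) (i : ℕ) (b : V), ¬ red b →
      (G.Adj (enum q i) b ↔ G.Adj q.1.out b) := by
    intro q i b hb
    obtain ⟨h1, h2 | h2⟩ := (enum q i).2
    · rw [h2]
    · exact ⟨htw _ _ b h1 q.2 hb h2.symm, htw _ _ b q.2 h1 hb h2⟩
  have hout : ∀ q q' : {q : Quotient s // red q.out}, ¬ G.Adj q.1.out q'.1.out := by
    intro q q' h
    have : q.1 = q'.1 := by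
      rw [← Quotient.out_eq q.1, ← Quotient.out_eq q'.1, hcls]
      exact Or.inr ⟨q.2, q'.2, h⟩
    rw [this] at h
    exact G.irrefl h
  refine ⟨Quotient s, G.comap Quotient.out, fun q => red q.out, ℕ,
    fun u v hu hv => hout ⟨u, hu⟩ ⟨v, hv⟩, ?_, ?_, ?_⟩
  · rw [Cardinal.mk_nat]
    exact Cardinal.ofNat_le_aleph0
  · rw [Cardinal.mk_nat]
  let e : blowUp (G.comap Quotient.out) (fun q : Quotient s => red q.out) ℕ ≃g G :=
    { toEquiv := Equiv.ofBijective g hg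
      map_rel_iff' := by
        rintro (⟨q, i⟩ | q) (⟨q', i'⟩ | q')
        · simp only [Equiv.ofBijective_apply, g, Sum.elim_inl, blowUp, SimpleGraph.fromRel_adj,
            SimpleGraph.comap_adj, hout, false_or]
          constructor
          · intro h
            have hq : q = q' := by
              refine Subtype.ext ?_
              rw [← hmem q i, ← hmem q' i', hcls]
              exact Or.inr ⟨(enum q i).2.1, (enum q' i').2.1, h⟩
            subst hq
            have hi : i ≠ i' := by
              rintro rfl
              exact G.irrefl h
            exact ⟨by simp [hi], Or.inl ⟨rfl, hi⟩⟩
          · rintro ⟨-, h⟩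
            have hq : q = q' ∧ i ≠ i' := h.elim id fun h => ⟨h.1.symm, h.2.symm⟩
            obtain ⟨rfl, hi⟩ := hq
            refine redClique_adj hR q.2 (enum q i).2 (enum q i').2 fun h => hi ?_
            exact (enum q).injective (Subtype.ext h)
        · simp only [Equiv.ofBijective_apply, g, Sum.elim_inl, Sum.elim_inr, blowUp,
            SimpleGraph.fromRel_adj, SimpleGraph.comap_adj, hcross q i _ q'.2]
          simp [G.adj_comm]
        · simp only [Equiv.ofBijective_apply, g, Sum.elim_inl, Sum.elim_inr, blowUp,
            SimpleGraph.fromRel_adj, SimpleGraph.comap_adj]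
          rw [G.adj_comm, hcross q' i' _ q.2]
          simp [G.adj_comm]
        · simp only [Equiv.ofBijective_apply, g, Sum.elim_inr, blowUp,
            SimpleGraph.fromRel_adj, SimpleGraph.comap_adj]
          constructor
          · intro h
            refine ⟨?_, Or.inl h⟩
            intro hq
            rw [Sum.inr.inj hq] at h
            exact G.irrefl h
          · rintro ⟨-, h | h⟩
            · exact h
            · exact h.symm }
  refine ⟨e.symm, fun v => ?_⟩
  obtain ⟨w, rfl⟩ := e.surjective v
  rw [RelIso.symm_apply_apply]
  rcases w with ⟨q, i⟩ | q
  · exact iff_of_true (enum q i).2.1 trivial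
  · exact iff_of_false q.2 id

/-- Two red vertices with the same neighbors in a finite set of blue vertices are in the same
orbit of its pointwise stabilizer. -/
theorem exists_aut_move_red (hU : Ultrahomogeneous G red) {T : Set V} (hT : T.Finite) {y y' : V}
    (hy : red y) (hy' : red y') (hTb : ∀ b ∈ T, ¬ red b)
    (hyy' : ∀ b ∈ T, (G.Adj y b ↔ G.Adj y' b)) :
    ∃ ψ : G ≃g G, (∀ v, red (ψ v) ↔ red v) ∧ ψ y = y' ∧ ∀ b ∈ T, ψ b = b := by
  classical
  have hne : ∀ b ∈ T, b ≠ y := fun b hb h => hTb b hb (h ▸ hy)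
  have hne' : ∀ b ∈ T, b ≠ y' := fun b hb h => hTb b hb (h ▸ hy')
  let f : V → V := fun v => if v = y then y' else v
  have hfy : f y = y' := if_pos rfl
  have hfT : ∀ b ∈ T, f b = b := fun b hb => if_neg (hne b hb)
  obtain ⟨ψ, hψ, hψS⟩ := hU (insert y T) (hT.insert y) f (by
    refine ⟨?_, ?_, ?_⟩
    · rintro u (rfl | hu) v (rfl | hv) h
      · rfl
      · rw [hfy, hfT v hv] at h
        exact absurd h.symm (hne' v hv)
      · rw [hfy, hfT u hu] at h
        exact absurd h (hne' u hu)
      · rwa [hfT u hu, hfT v hv] at h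
    · rintro u (rfl | hu)
      · rw [hfy]
        exact iff_of_true hy' hy
      · rw [hfT u hu]
    · rintro u (rfl | hu) v (rfl | hv)
      · simp
      · rw [hfy, hfT v hv, hyy' v hv]
      · rw [hfy, hfT u hu, G.adj_comm, G.adj_comm u, hyy' u hu]
      · rw [hfT u hu, hfT v hv])
  exact ⟨ψ, hψ, (hψS y (Set.mem_insert _ _)).trans hfy,
    fun b hb => (hψS b (Set.mem_insert_of_mem _ hb)).trans (hfT b hb)⟩

/-- If some blue vertex splits some red clique, then every blue vertex splits every red clique. -/
theorem exists_mem_redClique_adj_iff (hU : Ultrahomogeneous G red) {r₁ r₂ b₀ : V} (hr₁ : red r₁) (hr₂ : red r₂)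
    (hb₀ : ¬ red b₀) (hr : G.Adj r₁ r₂) (h₁ : G.Adj r₁ b₀) (h₂ : ¬ G.Adj r₂ b₀) (ε : Prop)
    {x b : V} (hx : red x) (hb : ¬ red b) :
    ∃ y ∈ redClique G red x, (G.Adj y b ↔ ε) := by
  classical
  by_cases hxb : G.Adj x b ↔ ε
  · exact ⟨x, mem_redClique_self hx, hxb⟩
  obtain ⟨s, t, hs, ht, hst, hsb, htb⟩ : ∃ s t, red s ∧ red t ∧ G.Adj s t ∧
      (G.Adj s b₀ ↔ G.Adj x b) ∧ (G.Adj t b₀ ↔ ¬ G.Adj x b) := by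
    by_cases h : G.Adj x b
    · exact ⟨r₁, r₂, hr₁, hr₂, hr, by tauto, by tauto⟩
    · exact ⟨r₂, r₁, hr₂, hr₁, hr.symm, by tauto, by tauto⟩
  have hsne : b₀ ≠ s := fun h => hb₀ (h ▸ hs)
  have hxne : x ≠ b := fun h => hb (h ▸ hx)
  obtain ⟨ψ, hψ, hψS⟩ := hU {s, b₀} (Set.toFinite _) (fun v => if v = s then x else b) (by
    refine ⟨?_, ?_, ?_⟩
    · rintro u (rfl | rfl) v (rfl | rfl) <;> simp [hsne, hxne, hxne.symm]
    · rintro u (rfl | rfl) <;> simp [hsne, hx, hb, hs, hb₀]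
    · rintro u (rfl | rfl) v (rfl | rfl) <;> simp [hsne, hsb]
      rw [G.adj_comm, ← hsb, G.adj_comm])
  have e1 : ψ s = x := by simpa using hψS s (by simp)
  have e2 : ψ b₀ = b := by simpa [hsne] using hψS b₀ (by simp)
  refine ⟨ψ t, ⟨(hψ t).2 ht, Or.inr ?_⟩, ?_⟩
  · rw [← e1]
    exact ψ.map_adj_iff.2 hst
  · rw [← e2, ψ.map_adj_iff, htb]
    tauto

/-- If every blue vertex splits every red clique, red cliques are infinite and there are two of
them, then every blue vertex has infinitely many neighbors and nonneighbors in each red clique. -/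
theorem infinite_redClique_adj_iff [Countable V] (hU : Ultrahomogeneous G red)
    (hR : IsUnionOfCliques G {v | red v}) (hinf : ∀ x, red x → (redClique G red x).Infinite)
    (hα : ∃ u v, red u ∧ red v ∧ u ≠ v ∧ ¬ G.Adj u v) {ε : Prop}
    (hsplit : ∀ x b, red x → ¬ red b → ∃ y ∈ redClique G red x, (G.Adj y b ↔ ε))
    {x b : V} (hx : red x) (hb : ¬ red b) :
    {y | y ∈ redClique G red x ∧ (G.Adj y b ↔ ε)}.Infinite := by
  classical
  intro hA
  obtain ⟨x', hx', hxx'⟩ : ∃ x', red x' ∧ x' ∉ redClique G red x := by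
    obtain ⟨u, v, hu, hv, huv, hadj⟩ := hα
    by_contra! h
    exact hadj (redClique_adj hR hx (h u hu) (h v hv) huv)
  have hdisj : ∀ u ∈ redClique G red x, ∀ v ∈ redClique G red x', u ≠ v ∧ ¬ G.Adj u v := by
    intro u hu v hv
    have key : v ∉ redClique G red x := by
      intro hvx
      rcases hv.2 with rfl | hv'
      · exact hxx' hvx
      · exact hxx' (mem_redClique_of_adj hR hx hvx hx' hv'.symm)
    exact ⟨fun h => key (h ▸ hu), fun h => key (mem_redClique_of_adj hR hx hu hv.1 h)⟩
  set A := {y | y ∈ redClique G red x ∧ (G.Adj y b ↔ ε)} with hAdef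
  set A' := {y | y ∈ redClique G red x' ∧ (G.Adj y b ↔ ε)} with hA'def
  obtain ⟨a, ha⟩ : A.Nonempty := hsplit x b hx hb
  obtain ⟨a', ha'⟩ : A'.Nonempty := hsplit x' b hx' hb
  have hA' : A'.Finite := by
    obtain ⟨ψ, hψ, e1, hfix⟩ := exists_aut_move_red hU (Set.finite_singleton b) ha'.1.1 ha.1.1
      (by simpa using hb) (by simpa using ha'.2.trans ha.2.symm)
    have e2 : ψ b = b := hfix b rfl
    refine Set.Finite.of_finite_image (hA.subset ?_) ψ.injective.injOn
    rintro _ ⟨y, hy, rfl⟩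
    refine ⟨map_mem_redClique hR hψ hx' hx ha'.1 hy.1 (e1 ▸ ha.1), ?_⟩
    rw [← hy.2]
    conv_lhs => rw [← e2]
    exact ψ.map_adj_iff
  have hrest : (redClique G red x' \ A').Infinite := (hinf x' hx').sdiff hA'
  obtain ⟨num, hnum⟩ := exists_injective_nat V
  let emb := hrest.natEmbedding
  let f : V → V := fun v => if v ∈ A' then (emb (num v) : V) else v
  have hfA' : ∀ v ∈ A', f v ∈ redClique G red x' \ A' := fun v hv => by
    simp only [f, if_pos hv]
    exact (emb (num v)).2
  have hfA : ∀ v ∈ A, f v = v := fun v hv =>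
    if_neg fun h => (hdisj v hv.1 v h.1).1 rfl
  have hfinj : ∀ u ∈ A', ∀ v ∈ A', f u = f v → u = v := by
    intro u hu v hv h
    simp only [f, if_pos hu, if_pos hv] at h
    exact hnum (emb.injective (Subtype.ext h))
  obtain ⟨ψ, hψ, hψS⟩ := hU (A ∪ A') (hA.union hA') f (by
    refine ⟨?_, ?_, ?_⟩
    · rintro u (hu | hu) v (hv | hv) h
      · rwa [hfA u hu, hfA v hv] at h
      · rw [hfA u hu] at h
        exact absurd h (hdisj _ hu.1 _ (hfA' v hv).1).1
      · rw [hfA v hv] at h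
        exact absurd h.symm (hdisj _ hv.1 _ (hfA' u hu).1).1
      · exact hfinj u hu v hv h
    · rintro u (hu | hu)
      · rw [hfA u hu]
      · exact iff_of_true (hfA' u hu).1.1 hu.1.1
    · rintro u (hu | hu) v (hv | hv)
      · rw [hfA u hu, hfA v hv]
      · rw [hfA u hu]
        exact iff_of_false (hdisj _ hu.1 _ (hfA' v hv).1).2 (hdisj _ hu.1 _ hv.1).2
      · rw [hfA v hv, G.adj_comm, G.adj_comm u]
        exact iff_of_false (hdisj _ hv.1 _ (hfA' u hu).1).2 (hdisj _ hv.1 _ hu.1).2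
      · by_cases huv : u = v
        · subst huv
          simp
        · exact iff_of_true
            (redClique_adj hR hx' (hfA' u hu).1 (hfA' v hv).1 fun h => huv (hfinj u hu v hv h))
            (redClique_adj hR hx' hu.1 hv.1 huv))
  have hψA : ∀ v ∈ A, ψ v = v := fun v hv => (hψS v (Or.inl hv)).trans (hfA v hv)
  have hψb : ¬ red (ψ b) := fun h => hb ((hψ b).1 h)
  -- In the clique of `x` the vertices `b` and `ψ b` agree; in that of `x'` they are disjoint.
  have hbx : ∀ y ∈ redClique G red x, (G.Adj y (ψ b) ↔ ε) → y ∈ A := by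
    intro y hy hyb
    obtain ⟨z, rfl⟩ := ψ.surjective y
    rw [ψ.map_adj_iff] at hyb
    have hzA : z ∈ A := by
      refine ⟨?_, hyb⟩
      by_cases h : a = z
      · exact h ▸ ha.1
      · have hzr := (hψ z).1 hy.1
        refine mem_redClique_of_adj hR hx ha.1 hzr (ψ.map_adj_iff.1 ?_)
        refine redClique_adj hR hx ?_ hy fun h' => h (ψ.injective h')
        rw [hψA a ha]
        exact ha.1
    rwa [hψA z hzA]
  have hbx' : ∀ y ∈ redClique G red x', (G.Adj y (ψ b) ↔ ε) → y ∈ f '' A' := by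
    intro y hy hyb
    obtain ⟨z, rfl⟩ := ψ.surjective y
    rw [ψ.map_adj_iff] at hyb
    have hzA : z ∈ A' := by
      refine ⟨?_, hyb⟩
      by_cases h : a' = z
      · exact h ▸ ha'.1
      · have hzr := (hψ z).1 hy.1
        refine mem_redClique_of_adj hR hx' ha'.1 hzr (ψ.map_adj_iff.1 ?_)
        refine redClique_adj hR hx' ?_ hy fun h' => h (ψ.injective h')
        rw [hψS a' (Or.inr ha')]
        exact (hfA' a' ha').1
    exact ⟨z, hzA, (hψS z (Or.inr hzA)).symm⟩
  obtain ⟨y, hy, hyA⟩ := ((hinf x hx).sdiff hA).nonempty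
  obtain ⟨y', hy', hyA'⟩ := ((hinf x' hx').sdiff (hA'.union (hA'.image f))).nonempty
  have hy1 : ¬ (G.Adj y b ↔ ε) := fun h => hyA ⟨hy, h⟩
  have hy2 : ¬ (G.Adj y (ψ b) ↔ ε) := fun h => hyA (hbx y hy h)
  have hy1' : ¬ (G.Adj y' b ↔ ε) := fun h => hyA' (Or.inl ⟨hy', h⟩)
  have hy2' : ¬ (G.Adj y' (ψ b) ↔ ε) := fun h => hyA' (Or.inr (hbx' y' hy' h))
  obtain ⟨χ, hχ, c1, hfix⟩ := exists_aut_move_red hU (Set.toFinite {b, ψ b}) hy.1 hy'.1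
    (by simp [hb, hψb]) (by
      simp only [Set.mem_insert_iff, Set.mem_singleton_iff, forall_eq_or_imp, forall_eq]
      tauto)
  have c2 : χ b = b := hfix b (by simp)
  have c3 : χ (ψ b) = ψ b := hfix (ψ b) (by simp)
  have hχa : χ a ∈ redClique G red x' := map_mem_redClique hR hχ hx hx' hy ha.1 (c1 ▸ hy')
  have m1 : χ a ∈ A' := by
    refine ⟨hχa, ?_⟩
    rw [← ha.2]
    conv_lhs => rw [← c2]
    exact χ.map_adj_iff
  have m2 : χ a ∈ f '' A' := by
    refine hbx' _ hχa ?_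
    rw [← ha.2]
    conv_lhs => rw [← c3]
    rw [χ.map_adj_iff]
    conv_lhs => rw [← hψA a ha]
    exact ψ.map_adj_iff
  obtain ⟨z, hz, hzχ⟩ := m2
  exact (hfA' z hz).2 (hzχ ▸ m1)

theorem RealizesUniform.mono_left {ε : Prop} {n m c : ℕ} (h : RealizesUniform G red ε n c)
    (hmn : m ≤ n) : RealizesUniform G red ε m c := by
  obtain ⟨C, S, hC, hS, hCr, hSb, hCc, hSi, hCS⟩ := h
  obtain ⟨C', hC', hcard⟩ := Finset.exists_subset_card_eq (hmn.trans hC.ge)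
  exact ⟨C', S, hcard, hS, fun v hv => hCr v (hC' hv), hSb,
    fun u hu v hv => hCc u (hC' hu) v (hC' hv), hSi, fun u hu => hCS u (hC' hu)⟩

/-- By ultrahomogeneity a realized pattern is realized over any red clique of the right size. -/
theorem RealizesUniform.exists_over (hU : Ultrahomogeneous G red) {ε : Prop} {n c : ℕ}
    (h : RealizesUniform G red ε n c) {X : Finset V} (hX : X.card = n) (hXr : ∀ v ∈ X, red v)
    (hXc : ∀ u ∈ X, ∀ v ∈ X, u ≠ v → G.Adj u v) :
    ∃ I : Finset V, I.card = c ∧ (∀ v ∈ I, ¬ red v) ∧ (∀ u ∈ I, ∀ v ∈ I, ¬ G.Adj u v) ∧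
      ∀ u ∈ X, ∀ v ∈ I, (G.Adj u v ↔ ε) := by
  classical
  obtain ⟨C, S, hC, hS, hCr, hSb, hCc, hSi, hCS⟩ := h
  let e : C ≃ X := Finset.equivOfCardEq (hC.trans hX.symm)
  let f : V → V := fun v => if hv : v ∈ C then (e ⟨v, hv⟩ : V) else v
  have hf : ∀ v (hv : v ∈ C), f v = e ⟨v, hv⟩ := fun v hv => dif_pos hv
  have hinj : Set.InjOn f (C : Set V) := by
    intro u hu v hv huv
    rw [hf u hu, hf v hv] at huv
    exact congrArg Subtype.val (e.injective (Subtype.ext huv))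
  have hfX : ∀ v ∈ C, f v ∈ X := fun v hv => by
    rw [hf v hv]
    exact (e ⟨v, hv⟩).2
  obtain ⟨ψ, hψ, hψS⟩ := hU C C.finite_toSet f ⟨hinj,
    fun v hv => iff_of_true (hXr _ (hfX v hv)) (hCr v hv), fun u hu v hv => by
      by_cases huv : u = v
      · subst huv
        simp
      · exact iff_of_true (hXc _ (hfX u hu) _ (hfX v hv) fun h => huv (hinj hu hv h))
          (hCc u hu v hv huv)⟩
  refine ⟨S.image ψ, by rw [Finset.card_image_of_injective _ ψ.injective, hS], ?_, ?_, ?_⟩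
  · simp only [Finset.mem_image]
    rintro _ ⟨v, hv, rfl⟩ h
    exact hSb v hv ((hψ v).1 h)
  · simp only [Finset.mem_image]
    rintro _ ⟨u, hu, rfl⟩ _ ⟨v, hv, rfl⟩ h
    exact hSi u hu v hv (ψ.map_adj_iff.1 h)
  · simp only [Finset.mem_image]
    rintro x hx _ ⟨v, hv, rfl⟩
    have hxe : ψ (e.symm ⟨x, hx⟩ : V) = x := by
      rw [hψS _ (e.symm ⟨x, hx⟩).2, hf _ (e.symm ⟨x, hx⟩).2]
      simp
    rw [← hCS _ (e.symm ⟨x, hx⟩).2 v hv]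
    conv_lhs => rw [← hxe]
    exact ψ.map_adj_iff

/-- If each blue vertex has infinitely many neighbors (nonneighbors) in some fixed red clique,
then over each red clique a blue independent set of any available size is realized. -/
theorem realizesUniform_of_infinite (hU : Ultrahomogeneous G red)
    (hR : IsUnionOfCliques G {v | red v}) (hB : IsUnionOfCliques G {v | ¬ red v}) {ε : Prop}
    {x : V} (hx : red x) (hinf : (redClique G red x).Infinite)
    (hb : ∀ b, ¬ red b → {y | y ∈ redClique G red x ∧ (G.Adj y b ↔ ε)}.Infinite) (r k : ℕ)
    {S : Finset V} (hS : S.card = k) (hSb : ∀ v ∈ S, ¬ red v)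
    (hSi : ∀ u ∈ S, ∀ v ∈ S, ¬ G.Adj u v) : RealizesUniform G red ε r k := by
  classical
  have hzero : ∀ n, RealizesUniform G red ε n 0 := by
    intro n
    obtain ⟨C, hC, hcard⟩ := hinf.exists_subset_card_eq n
    exact ⟨C, ∅, hcard, rfl, fun v hv => (hC hv).1, by simp,
      fun u hu v hv => redClique_adj hR hx (hC hu) (hC hv), by simp, by simp⟩
  by_contra hcon
  -- `c` is the least independence number of a common (non)neighborhood of a red `n`-clique.
  have hex : ∃ c, ∃ n, r ≤ n ∧ ¬ RealizesUniform G red ε n (c + 1) := by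
    obtain _ | k := k
    · exact absurd (hzero r) hcon
    · exact ⟨k, r, le_rfl, hcon⟩
  obtain ⟨n, hrn, hn⟩ := Nat.find_spec hex
  have hmin := fun c => Nat.find_min (m := c) hex
  generalize Nat.find hex = c at hn hmin
  have hc : ∀ m, r ≤ m → RealizesUniform G red ε m c := by
    intro m hm
    obtain _ | c := c
    · exact hzero m
    · by_contra h
      exact hmin c (Nat.lt_succ_self c) ⟨m, hm, h⟩
  obtain ⟨X, hXK, hXn⟩ := hinf.exists_subset_card_eq n
  have hXadj : ∀ u ∈ X, ∀ v ∈ X, u ≠ v → G.Adj u v :=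
    fun u hu v hv => redClique_adj hR hx (hXK hu) (hXK hv)
  have hrep : ∀ s, ¬ red s → ∃ t, ¬ red t ∧ (s = t ∨ G.Adj s t) ∧ ∀ u ∈ X, (G.Adj u t ↔ ε) := by
    intro s hs
    obtain ⟨Y, hY, hYn⟩ := (hb s hs).exists_subset_card_eq n
    have hZ : ∀ v ∈ X ∪ Y, v ∈ redClique G red x := by
      intro v hv
      rcases Finset.mem_union.1 hv with h | h
      · exact hXK h
      · exact (hY h).1
    obtain ⟨I, hIc, hIb, hIi, hI⟩ :=
      (hc (X ∪ Y).card (hrn.trans (hXn ▸ Finset.card_le_card Finset.subset_union_left))).exists_over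
        hU rfl (fun v hv => (hZ v hv).1)
        (fun u hu v hv => redClique_adj hR hx (hZ u hu) (hZ v hv))
    by_contra! hno
    have hsI : ∀ t ∈ I, s ≠ t ∧ ¬ G.Adj s t := by
      intro t ht
      by_contra h
      obtain ⟨u, hu, hut⟩ := hno t (hIb t ht) (by tauto)
      have := hI u (Finset.mem_union_left _ hu) t ht
      tauto
    refine hn ⟨Y, insert s I, hYn, ?_, fun v hv => (hY hv).1.1, ?_,
      fun u hu v hv => redClique_adj hR hx (hY hu).1 (hY hv).1, ?_, ?_⟩
    · rw [Finset.card_insert_of_notMem fun h => (hsI s h).1 rfl, hIc]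
    · intro v hv
      rcases Finset.mem_insert.1 hv with rfl | hv
      · exact hs
      · exact hIb v hv
    · intro u hu v hv
      rcases Finset.mem_insert.1 hu with hu' | hu' <;>
        rcases Finset.mem_insert.1 hv with hv' | hv'
      · rw [hu', hv']
        exact G.irrefl
      · rw [hu']
        exact (hsI v hv').2
      · rw [hv']
        exact fun h => (hsI u hu').2 h.symm
      · exact hIi u hu' v hv'
    · intro u hu v hv
      rcases Finset.mem_insert.1 hv with rfl | hv
      · exact (hY hu).2
      · exact hI u (Finset.mem_union_right _ hu) v hv
  choose! t htb hst ht using hrep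
  have hsep : ∀ u ∈ S, ∀ v ∈ S, t u = t v ∨ G.Adj (t u) (t v) → u = v := by
    intro u hu v hv h
    have hub := hSb u hu
    have hvb := hSb v hv
    have htrans : ∀ a b d, ¬ red a → ¬ red b → ¬ red d → (a = b ∨ G.Adj a b) →
        (b = d ∨ G.Adj b d) → (a = d ∨ G.Adj a d) := by
      rintro a b d ha hb' hd (rfl | h1) (rfl | h2)
      · exact Or.inl rfl
      · exact Or.inr h2
      · exact Or.inr h1
      · by_cases had : a = d
        · exact Or.inl had
        · exact Or.inr (hB a ha b hb' d hd h1 h2 had)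
    have h1 := htrans u (t u) (t v) hub (htb u hub) (htb v hvb) (hst u hub) h
    have h2 := htrans u (t v) v hub (htb v hvb) hvb h1
      ((hst v hvb).imp Eq.symm fun h => h.symm)
    exact h2.resolve_right (hSi u hu v hv)
  refine hcon (RealizesUniform.mono_left ⟨X, S.image t, hXn, ?_, fun v hv => (hXK hv).1, ?_,
    hXadj, ?_, ?_⟩ hrn)
  · rw [Finset.card_image_of_injOn fun u hu v hv h => hsep u hu v hv (Or.inl h), hS]
  · simp only [Finset.mem_image]
    rintro _ ⟨s, hs, rfl⟩
    exact htb s (hSb s hs)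
  · simp only [Finset.mem_image]
    rintro _ ⟨u, hu, rfl⟩ _ ⟨v, hv, rfl⟩ h
    rw [hsep u hu v hv (Or.inr h)] at h
    exact G.irrefl h
  · simp only [Finset.mem_image]
    rintro u hu _ ⟨s, hs, rfl⟩
    exact ht s (hSb s hs) u hu

end RedCliques

/-- in a basic CUH graph omitting `D` with a non-independent color class and
ω_R = ℵ₀, for all naturals `r` and `k ≤ α_B`, the join of a red `r`-clique with a blue
independent `k`-set, and their disjoint union, are both realized. -/
theorem stmt_13 {V : Type} (G : SimpleGraph V) (red : V → Prop)
    (hG : IsBasicCUH G red)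
    (hOmD : ¬ Realizes G red Dgraph Dred)
    (hni : (∃ u v, red u ∧ red v ∧ G.Adj u v) ∨ (∃ u v, ¬ red u ∧ ¬ red v ∧ G.Adj u v))
    (hωR : ∀ M : Set V, IsMaxCliqueIn G {v | red v} M → Cardinal.mk M = Cardinal.aleph0) :
    ∀ r k : ℕ,
      (∃ S : Finset V, S.card = k ∧ (∀ v ∈ S, ¬ red v) ∧
        (∀ u ∈ S, ∀ v ∈ S, ¬ G.Adj u v)) →
      ((∃ (C S : Finset V), C.card = r ∧ S.card = k ∧
          (∀ v ∈ C, red v) ∧ (∀ v ∈ S, ¬ red v) ∧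
          (∀ u ∈ C, ∀ v ∈ C, u ≠ v → G.Adj u v) ∧ (∀ u ∈ S, ∀ v ∈ S, ¬ G.Adj u v) ∧
          (∀ u ∈ C, ∀ v ∈ S, G.Adj u v)) ∧
       (∃ (C S : Finset V), C.card = r ∧ S.card = k ∧
          (∀ v ∈ C, red v) ∧ (∀ v ∈ S, ¬ red v) ∧
          (∀ u ∈ C, ∀ v ∈ C, u ≠ v → G.Adj u v) ∧ (∀ u ∈ S, ∀ v ∈ S, ¬ G.Adj u v) ∧
          (∀ u ∈ C, ∀ v ∈ S, ¬ G.Adj u v))) := by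
  obtain ⟨⟨hcount, -, hU, hR, hB⟩, hnb, hα, -⟩ := hG
  have hω : ∀ x, red x → Cardinal.mk (redClique G red x) = Cardinal.aleph0 :=
    fun x hx => hωR _ (redClique_isMaxCliqueIn hR hx)
  have hinf : ∀ x, red x → (redClique G red x).Infinite := fun x hx =>
    Set.infinite_coe_iff.1 (Cardinal.infinite_iff.2 (hω x hx).ge)
  obtain ⟨r₁, r₂, b₀, hr₁, hr₂, hb₀, hr, h₁, h₂⟩ : ∃ r₁ r₂ b₀, red r₁ ∧ red r₂ ∧ ¬ red b₀ ∧
      G.Adj r₁ r₂ ∧ G.Adj r₁ b₀ ∧ ¬ G.Adj r₂ b₀ := by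
    by_contra! h
    exact hnb (Or.inl (isBlowUpOf_of_twins hR hω h))
  rintro r k ⟨S, hS, hSb, hSi⟩
  have key : ∀ ε : Prop, RealizesUniform G red ε r k := fun ε =>
    realizesUniform_of_infinite hU hR hB hr₁ (hinf r₁ hr₁)
      (fun b hb => infinite_redClique_adj_iff hU hR hinf hα
        (fun x b hx hb => exists_mem_redClique_adj_iff hU hr₁ hr₂ hb₀ hr h₁ h₂ ε hx hb)
        hr₁ hb) r k hS hSb hSi
  constructor
  · simpa only [RealizesUniform, iff_true] using key True
  · simpa only [RealizesUniform, iff_false] using key False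
end

section
/- Let G be a basic CUH graph that omits D and in which at least one color class does not form an independent set. If H is a non-monochromatic minimally omitted subgraph of G that is not isomorphic to any of the graphs T_r, T̃_r, T_b, T̃_b, D, D̃, then both color classes of H are independent sets of size at least 2. -/
open SimpleGraph

/-! ### Two sorted structures: two equivalence relations and a cross relation

A 2-colored graph whose color classes are disjoint unions of cliques is the same as two types
`R`, `B`, two equivalence relations `s`, `t` (lying in a common clique) and a relation `E` between
`R` and `B` (the cross edges). In this form, swapping the colors and complementing the cross
edges are transparent symmetries. -/

namespace CliquePair

variable {R B : Type}

/-- A color-preserving automorphism. -/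
structure IsAut (s : Setoid R) (t : Setoid B) (E : R → B → Prop) (σ : R ≃ R) (τ : B ≃ B) :
    Prop where
  rel_left : ∀ r r', s (σ r) (σ r') ↔ s r r'
  rel_right : ∀ b b', t (τ b) (τ b') ↔ t b b'
  cross : ∀ r b, E (σ r) (τ b) ↔ E r b

/-- The tuples `(x, y)` and `(x', y')` have the same isomorphism type. -/
structure SameType (s : Setoid R) (t : Setoid B) (E : R → B → Prop) {ι κ : Type}
    (x x' : ι → R) (y y' : κ → B) : Prop where
  eq_left : ∀ i j, x i = x j ↔ x' i = x' j
  eq_right : ∀ i j, y i = y j ↔ y' i = y' j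
  rel_left : ∀ i j, s (x i) (x j) ↔ s (x' i) (x' j)
  rel_right : ∀ i j, t (y i) (y j) ↔ t (y' i) (y' j)
  cross : ∀ i j, E (x i) (y j) ↔ E (x' i) (y' j)

/-- Ultrahomogeneity. -/
def Homogeneous (s : Setoid R) (t : Setoid B) (E : R → B → Prop) : Prop :=
  ∀ (ι κ : Type) [Finite ι] [Finite κ] (x x' : ι → R) (y y' : κ → B),
    SameType s t E x x' y y' →
      ∃ σ τ, IsAut s t E σ τ ∧ (∀ i, σ (x i) = x' i) ∧ ∀ j, τ (y j) = y' j

/-- The properties of a basic CUH graph that are used below. -/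
structure Basic (s : Setoid R) (t : Setoid B) (E : R → B → Prop) : Prop where
  hom : Homogeneous s t E
  inf : Infinite R ∨ Infinite B
  twin_left : ∀ r r', s r r' → (∀ b, E r b ↔ E r' b) → r = r'
  twin_right : ∀ b b', t b b' → (∀ r, E r b ↔ E r b') → b = b'
  two_left : ∃ r r', ¬ s r r'
  two_right : ∃ b b', ¬ t b b'

variable {s : Setoid R} {t : Setoid B} {E : R → B → Prop}

theorem IsAut.flip {σ : R ≃ R} {τ : B ≃ B} (h : IsAut s t E σ τ) :
    IsAut t s (fun b r => E r b) τ σ :=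
  ⟨h.rel_right, h.rel_left, fun b r => h.cross r b⟩

theorem IsAut.compl {σ : R ≃ R} {τ : B ≃ B} (h : IsAut s t E σ τ) :
    IsAut s t (fun r b => ¬ E r b) σ τ :=
  ⟨h.rel_left, h.rel_right, fun r b => not_congr (h.cross r b)⟩

theorem Homogeneous.flip (h : Homogeneous s t E) : Homogeneous t s (fun b r => E r b) := by
  intro ι κ _ _ x x' y y' hxy
  obtain ⟨σ, τ, ha, hx, hy⟩ := h κ ι y y' x x'
    ⟨hxy.eq_right, hxy.eq_left, hxy.rel_right, hxy.rel_left, fun i j => hxy.cross j i⟩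
  exact ⟨τ, σ, ha.flip, hy, hx⟩

theorem Homogeneous.compl (h : Homogeneous s t E) : Homogeneous s t (fun r b => ¬ E r b) := by
  intro ι κ _ _ x x' y y' hxy
  obtain ⟨σ, τ, ha, hx, hy⟩ := h ι κ x x' y y'
    ⟨hxy.eq_left, hxy.eq_right, hxy.rel_left, hxy.rel_right,
      fun i j => not_iff_not.1 (hxy.cross i j)⟩
  exact ⟨σ, τ, ha.compl, hx, hy⟩

theorem Basic.flip (h : Basic s t E) : Basic t s (fun b r => E r b) :=
  ⟨h.hom.flip, h.inf.symm, h.twin_right, h.twin_left, h.two_right, h.two_left⟩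

theorem Basic.compl (h : Basic s t E) : Basic s t (fun r b => ¬ E r b) :=
  ⟨h.hom.compl, h.inf,
    fun r r' hr hb => h.twin_left r r' hr fun b => not_iff_not.1 (hb b),
    fun b b' hb hr => h.twin_right b b' hb fun r => not_iff_not.1 (hr r),
    h.two_left, h.two_right⟩

theorem Homogeneous.exists_aut_right (h : Homogeneous s t E) (b b' : B) :
    ∃ σ τ, IsAut s t E σ τ ∧ τ b = b' := by
  obtain ⟨σ, τ, ha, -, hy⟩ := h Empty Unit Empty.elim Empty.elim (fun _ => b) (fun _ => b')
    ⟨by simp, by simp, by simp, fun _ _ => ⟨fun _ => t.refl _, fun _ => t.refl _⟩, by simp⟩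
  exact ⟨σ, τ, ha, hy ()⟩

theorem Homogeneous.exists_aut_left (h : Homogeneous s t E) (r r' : R) :
    ∃ σ τ, IsAut s t E σ τ ∧ σ r = r' := by
  obtain ⟨τ, σ, ha, hr⟩ := h.flip.exists_aut_right r r'
  exact ⟨σ, τ, ha.flip, hr⟩

theorem Homogeneous.exists_aut_cross (h : Homogeneous s t E) {r r' : R} {b b' : B}
    (hE : E r b ↔ E r' b') : ∃ σ τ, IsAut s t E σ τ ∧ σ r = r' ∧ τ b = b' := by
  obtain ⟨σ, τ, ha, hx, hy⟩ := h Unit Unit (fun _ => r) (fun _ => r') (fun _ => b) (fun _ => b')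
    ⟨by simp, by simp, fun _ _ => ⟨fun _ => s.refl _, fun _ => s.refl _⟩,
      fun _ _ => ⟨fun _ => t.refl _, fun _ => t.refl _⟩, fun _ _ => hE⟩
  exact ⟨σ, τ, ha, hx (), hy ()⟩

theorem Homogeneous.exists_aut_left_pair (h : Homogeneous s t E) {r₁ r₂ r₁' r₂' : R}
    (hne : r₁ ≠ r₂) (hne' : r₁' ≠ r₂') (hs : s r₁ r₂ ↔ s r₁' r₂') :
    ∃ σ τ, IsAut s t E σ τ ∧ σ r₁ = r₁' ∧ σ r₂ = r₂' := by
  obtain ⟨σ, τ, ha, hx, -⟩ := h (Fin 2) Empty ![r₁, r₂] ![r₁', r₂'] Empty.elim Empty.elim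
    ⟨by simp [Fin.forall_fin_succ, hne, hne', hne.symm, hne'.symm], by simp,
      by simp [Fin.forall_fin_succ, hs, s.comm' (x := r₂), s.comm' (x := r₂')], by simp, by simp⟩
  exact ⟨σ, τ, ha, hx 0, hx 1⟩

theorem Homogeneous.exists_aut_left_right_pair (h : Homogeneous s t E) {r r' : R}
    {b₁ b₂ b₁' b₂' : B} (hne : b₁ ≠ b₂) (hne' : b₁' ≠ b₂') (ht : t b₁ b₂ ↔ t b₁' b₂')
    (h₁ : E r b₁ ↔ E r' b₁') (h₂ : E r b₂ ↔ E r' b₂') :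
    ∃ σ τ, IsAut s t E σ τ ∧ σ r = r' ∧ τ b₁ = b₁' ∧ τ b₂ = b₂' := by
  obtain ⟨σ, τ, ha, hx, hy⟩ := h Unit (Fin 2) (fun _ => r) (fun _ => r') ![b₁, b₂] ![b₁', b₂']
    ⟨by simp, by simp [Fin.forall_fin_succ, hne, hne', hne.symm, hne'.symm], by simp,
      by simp [Fin.forall_fin_succ, ht, t.comm' (x := b₂), t.comm' (x := b₂')],
      by simp [Fin.forall_fin_succ, h₁, h₂]⟩
  exact ⟨σ, τ, ha, hx (), hy 0, hy 1⟩

theorem Basic.exists_not_rel (h : Basic s t E) (r : R) : ∃ r', ¬ s r r' := by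
  by_contra! hcon
  obtain ⟨x, y, hxy⟩ := h.two_left
  exact hxy (s.trans (s.symm (hcon x)) (hcon y))

theorem Basic.exists_cross (h : Basic s t E) (hedge : ∃ r r', r ≠ r' ∧ s r r') :
    ∃ r r' b, s r r' ∧ E r b ∧ ¬ E r' b := by
  obtain ⟨r, r', hne, hs⟩ := hedge
  by_contra! hcon
  exact hne (h.twin_left r r' hs fun b => ⟨hcon r r' b hs, hcon r' r b (s.symm hs)⟩)

/-- Every vertex has a neighbor in each nontrivial clique of the other color. -/
theorem Basic.exists_adj (h : Basic s t E) (hedge : ∃ r r', r ≠ r' ∧ s r r') (r : R) (b : B) :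
    ∃ r', s r r' ∧ E r' b := by
  by_cases hE : E r b
  · exact ⟨r, s.refl r, hE⟩
  obtain ⟨r₁, r₂, b₀, hs, h₁, h₂⟩ := h.exists_cross hedge
  obtain ⟨σ, τ, ha, rfl, rfl⟩ := h.hom.exists_aut_cross (r := r₂) (r' := r) (b := b₀) (b' := b)
    (by simp [h₂, hE])
  exact ⟨σ r₁, (ha.rel_left _ _).2 (s.symm hs), (ha.cross _ _).2 h₁⟩

theorem Basic.exists_not_adj (h : Basic s t E) (hedge : ∃ r r', r ≠ r' ∧ s r r') (r : R) (b : B) :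
    ∃ r', s r r' ∧ ¬ E r' b :=
  h.compl.exists_adj hedge r b

/-- Two left vertices in different cliques have a common neighbor. -/
theorem Basic.exists_common (h : Basic s t E) (hedge : ∃ r r', r ≠ r' ∧ s r r') {r r' : R}
    (hs : ¬ s r r') : ∃ b, E r b ∧ E r' b := by
  obtain ⟨b, -⟩ := h.two_right
  obtain ⟨r₁, -, h₁⟩ := h.exists_adj hedge r b
  obtain ⟨r₂, hr₂⟩ := h.exists_not_rel r₁
  obtain ⟨r₃, hr₃, h₃⟩ := h.exists_adj hedge r₂ b
  have hs' : ¬ s r₁ r₃ := fun hc => hr₂ (s.trans hc (s.symm hr₃))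
  obtain ⟨σ, τ, ha, rfl, rfl⟩ := h.hom.exists_aut_left_pair (r₁ := r₁) (r₂ := r₃) (r₁' := r)
    (r₂' := r') (fun hc => hs' (hc ▸ s.refl _)) (fun hc => hs (hc ▸ s.refl _)) (by simp [hs, hs'])
  exact ⟨τ b, (ha.cross _ _).2 h₁, (ha.cross _ _).2 h₃⟩

/-- Two left vertices in different cliques are distinguished by a right vertex. -/
theorem Basic.exists_distinguish (h : Basic s t E) (hedge : ∃ r r', r ≠ r' ∧ s r r') {r r' : R}
    (hs : ¬ s r r') : ∃ b, E r b ∧ ¬ E r' b := by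
  obtain ⟨b, hb, hb'⟩ := h.exists_common hedge hs
  obtain ⟨r₂, hr₂, h₂⟩ := h.exists_not_adj hedge r' b
  have hs' : ¬ s r r₂ := fun hc => hs (s.trans hc (s.symm hr₂))
  obtain ⟨σ, τ, ha, h₁, rfl⟩ := h.hom.exists_aut_left_pair (r₁ := r) (r₂ := r₂) (r₁' := r)
    (r₂' := r') (fun hc => hs' (hc ▸ s.refl _)) (fun hc => hs (hc ▸ s.refl _)) (by simp [hs, hs'])
  exact ⟨τ b, h₁ ▸ (ha.cross r b).2 hb, fun hc => h₂ ((ha.cross _ _).1 hc)⟩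

/-! ### Omitting `D` makes the cross edges between two cliques balanced -/

/-- Between any two cliques of different colors every `2 × 2` pattern has an even number of
edges. -/
def Balanced (s : Setoid R) (t : Setoid B) (E : R → B → Prop) : Prop :=
  ∀ r r' b b', s r r' → t b b' → ((E r b ↔ E r b') ↔ (E r' b ↔ E r' b'))

/-- No `2 × 2` pattern between two cliques has exactly three edges. -/
def OmitsDiamond (s : Setoid R) (t : Setoid B) (E : R → B → Prop) : Prop :=
  ∀ r r' b b', s r r' → t b b' → E r b → E r b' → E r' b → E r' b'

theorem OmitsDiamond.flip (h : OmitsDiamond s t E) : OmitsDiamond t s (fun b r => E r b) :=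
  fun b b' r r' hb hr h₁ h₂ h₃ => h r r' b b' hr hb h₁ h₃ h₂

theorem Balanced.flip (h : Balanced s t E) : Balanced t s (fun b r => E r b) := by
  intro b b' r r' hb hr
  have := h r r' b b' hr hb
  tauto

theorem Balanced.compl (h : Balanced s t E) : Balanced s t (fun r b => ¬ E r b) := by
  intro r r' b b' hr hb
  have := h r r' b b' hr hb
  tauto

/-- If some `2 × 2` pattern between two cliques has exactly one edge, then no two vertices of a
right clique have a common neighbor. -/
theorem Basic.no_common_of_single_edge (h : Basic s t E) (hedge : ∃ r r', r ≠ r' ∧ s r r')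
    (hD : OmitsDiamond s t E) {r r' : R} {b b' : B} (hs : s r r') (ht : t b b')
    (h₁ : E r b) (h₂ : ¬ E r b') (h₃ : ¬ E r' b) (h₄ : ¬ E r' b') {c c' : B} (hc : t c c')
    (hne : c ≠ c') (x : R) (hx : E x c) : ¬ E x c' := by
  intro hx'
  obtain ⟨y, hy, hyc⟩ := h.exists_not_adj hedge x c
  have hyc' : ¬ E y c' := fun hy' => hyc (hD x y c' c hy (t.symm hc) hx' hx hy')
  obtain ⟨σ, τ, ha, rfl, rfl, rfl⟩ := h.hom.exists_aut_left_right_pair (r := y) (r' := r')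
    (b₁ := c) (b₂ := c') (b₁' := b) (b₂' := b') hne (fun hb => h₂ (hb ▸ h₁)) (by simp [hc, ht])
    (by simp [h₃, hyc]) (by simp [h₄, hyc'])
  exact h₂ (hD (σ x) r (τ c) (τ c') (s.trans ((ha.rel_left _ _).2 hy) (s.symm hs)) ht
    ((ha.cross _ _).2 hx) ((ha.cross _ _).2 hx') h₁)

theorem Basic.not_single_edge (h : Basic s t E) (hedge : ∃ r r', r ≠ r' ∧ s r r')
    (hedge' : ∃ b b', b ≠ b' ∧ t b b') (hD : OmitsDiamond s t E) {r r' : R} {b b' : B}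
    (hs : s r r') (ht : t b b') (h₁ : E r b) (h₂ : ¬ E r b') (h₃ : ¬ E r' b) : E r' b' := by
  by_contra h₄
  have hR : ∀ {x x' : R}, s x x' → x ≠ x' → ∀ y, E x y → ¬ E x' y :=
    h.flip.no_common_of_single_edge hedge' hD.flip ht hs h₁ h₃ h₂ h₄
  obtain ⟨r₃, hr₃, h₅⟩ := h.exists_adj hedge r b'
  have hr₃r : r₃ ≠ r := fun hc => h₂ (hc ▸ h₅)
  have hr₃r' : r₃ ≠ r' := fun hc => h₄ (hc ▸ h₅)
  have hrr' : r ≠ r' := fun hc => h₃ (hc ▸ h₁)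
  obtain ⟨b₀, hb₀⟩ := h.flip.exists_not_rel b
  obtain ⟨c₁, hc₁, h₆⟩ := h.flip.exists_adj hedge' b₀ r
  obtain ⟨c₂, hc₂, h₇⟩ := h.flip.exists_adj hedge' b₀ r₃
  have hbc : ∀ {c}, t b₀ c → ¬ t b c := fun hc hb => hb₀ (t.trans hb (t.symm hc))
  obtain ⟨σ, τ, ha, hσ, hτ, rfl⟩ := h.hom.exists_aut_left_right_pair (r := r') (r' := r')
    (b₁ := b) (b₂ := c₁) (b₁' := b) (b₂' := c₂) (fun hc => hbc hc₁ (hc ▸ t.refl _))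
    (fun hc => hbc hc₂ (hc ▸ t.refl _)) (by simp [hbc hc₁, hbc hc₂]) Iff.rfl
    (by simp [hR hs hrr' _ h₆, hR (s.trans (s.symm hr₃) hs) hr₃r' _ h₇])
  have hσr : σ r = r := by
    by_contra hne
    refine hR ?_ hne b (by simpa [hτ] using (ha.cross r b).2 h₁) h₁
    have := (ha.rel_left r r').2 hs
    rw [hσ] at this
    exact s.trans this (s.symm hs)
  have := (ha.cross r c₁).2 h₆
  rw [hσr] at this
  exact hR hr₃ hr₃r.symm _ this h₇

theorem Balanced.omitsDiamond (h : Balanced s t E) : OmitsDiamond s t E := by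
  intro r r' b b' hs ht
  have := h r r' b b' hs ht
  tauto

theorem balanced_of_omitsDiamond (h : OmitsDiamond s t E)
    (h' : OmitsDiamond s t (fun r b => ¬ E r b)) : Balanced s t E := by
  intro r r' b b' hs ht
  have := h r r' b b' hs ht
  have := h r r' b' b hs (t.symm ht)
  have := h r' r b b' (s.symm hs) ht
  have := h r' r b' b (s.symm hs) (t.symm ht)
  have := h' r r' b b' hs ht
  have := h' r r' b' b hs (t.symm ht)
  have := h' r' r b b' (s.symm hs) ht
  have := h' r' r b' b (s.symm hs) (t.symm ht)
  grind

theorem eq_of_rel_of_no_edge (hs : ¬ ∃ r r', r ≠ r' ∧ s r r') (r r' : R) (hr : s r r') :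
    r = r' := by
  by_contra hne
  exact hs ⟨r, r', hne, hr⟩

/-- A basic structure that omits `D` is balanced. -/
theorem Basic.balanced (h : Basic s t E) (hD : OmitsDiamond s t E) : Balanced s t E := by
  by_cases hedge : ∃ r r', r ≠ r' ∧ s r r'
  · by_cases hedge' : ∃ b b', b ≠ b' ∧ t b b'
    · exact balanced_of_omitsDiamond hD fun r r' b b' hs ht h₁ h₂ h₃ h₄ =>
        h₁ (h.not_single_edge hedge hedge' hD (s.symm hs) (t.symm ht) h₄ h₃ h₂)
    · intro r r' b b' _ ht
      simp [eq_of_rel_of_no_edge hedge' b b' ht]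
  · intro r r' b b' hs _
    rw [eq_of_rel_of_no_edge hedge r r' hs]

/-! ### Infinitude of cliques and neighborhoods -/

/-- A balanced basic structure with a nontrivial left clique. -/
structure Tame (s : Setoid R) (t : Setoid B) (E : R → B → Prop) : Prop extends Basic s t E where
  edge : ∃ r r', r ≠ r' ∧ s r r'
  balanced : Balanced s t E

theorem Tame.compl (h : Tame s t E) : Tame s t (fun r b => ¬ E r b) :=
  ⟨h.toBasic.compl, h.edge, h.balanced.compl⟩

theorem Tame.flip (h : Tame s t E) (hedge : ∃ b b', b ≠ b' ∧ t b b') :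
    Tame t s (fun b r => E r b) :=
  ⟨h.toBasic.flip, hedge, h.balanced.flip⟩

theorem nonempty_embedding_of_finite_of_infinite (α β : Type) [Finite α] [Infinite β] :
    Nonempty (α ↪ β) := by
  obtain ⟨n, ⟨e⟩⟩ := Finite.exists_equiv_fin α
  exact ⟨(e.toEmbedding.trans Fin.valEmbedding).trans (Infinite.natEmbedding β)⟩

theorem Homogeneous.exists_aut_left_triple (h : Homogeneous s t E) {x y z x' y' z' : R}
    (hxy : x ≠ y) (hxz : x ≠ z) (hyz : y ≠ z) (hsy : s x y) (hsz : s x z)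
    (hxy' : x' ≠ y') (hxz' : x' ≠ z') (hyz' : y' ≠ z') (hsy' : s x' y') (hsz' : s x' z') :
    ∃ σ τ, IsAut s t E σ τ ∧ σ x = x' ∧ σ y = y' ∧ σ z = z' := by
  obtain ⟨σ, τ, ha, hx, -⟩ := h (Fin 3) Empty ![x, y, z] ![x', y', z'] Empty.elim Empty.elim
    ⟨by simp [Fin.forall_fin_succ, hxy, hxz, hyz, hxy', hxz', hyz', hxy.symm, hxz.symm, hyz.symm,
        hxy'.symm, hxz'.symm, hyz'.symm], by simp,
      by simp [Fin.forall_fin_succ, hsy, hsz, hsy', hsz', s.symm hsy, s.symm hsz, s.symm hsy',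
        s.symm hsz', s.trans (s.symm hsy) hsz, s.trans (s.symm hsz) hsy,
        s.trans (s.symm hsy') hsz', s.trans (s.symm hsz') hsy'], by simp, by simp⟩
  exact ⟨σ, τ, ha, hx 0, hx 1, hx 2⟩

/-- Homogeneity for two edges in different left cliques. -/
theorem Homogeneous.exists_aut_left_edges (h : Homogeneous s t E) {x y z w x' y' z' w' : R}
    (hxy : x ≠ y) (hzw : z ≠ w) (hsxy : s x y) (hszw : s z w) (hsxz : ¬ s x z)
    (hxy' : x' ≠ y') (hzw' : z' ≠ w') (hsxy' : s x' y') (hszw' : s z' w') (hsxz' : ¬ s x' z') :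
    ∃ σ τ, IsAut s t E σ τ ∧ σ x = x' ∧ σ y = y' ∧ σ z = z' ∧ σ w = w' := by
  have key : ∀ {x y z w : R}, s x y → s z w → ¬ s x z →
      ¬ s x w ∧ ¬ s y z ∧ ¬ s y w := by
    intro x y z w h₁ h₂ h₃
    exact ⟨fun hc => h₃ (s.trans hc (s.symm h₂)), fun hc => h₃ (s.trans h₁ hc),
      fun hc => h₃ (s.trans (s.trans h₁ hc) (s.symm h₂))⟩
  have ne : ∀ {a b : R}, ¬ s a b → a ≠ b := fun hab hc => hab (hc ▸ s.refl _)
  obtain ⟨k₁, k₂, k₃⟩ := key hsxy hszw hsxz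
  obtain ⟨k₁', k₂', k₃'⟩ := key hsxy' hszw' hsxz'
  obtain ⟨σ, τ, ha, hx, -⟩ := h (Fin 4) Empty ![x, y, z, w] ![x', y', z', w']
    Empty.elim Empty.elim
    ⟨by
      simp [Fin.forall_fin_succ, hxy, hzw, hxy', hzw', hxy.symm, hzw.symm, hxy'.symm, hzw'.symm,
        ne hsxz, ne k₁, ne k₂, ne k₃, ne hsxz', ne k₁', ne k₂', ne k₃', (ne hsxz).symm,
        (ne k₁).symm, (ne k₂).symm, (ne k₃).symm, (ne hsxz').symm, (ne k₁').symm, (ne k₂').symm,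
        (ne k₃').symm], by simp,
      by
      simp [Fin.forall_fin_succ, hsxy, hszw, hsxz, hsxy', hszw', hsxz', k₁, k₂, k₃, k₁', k₂', k₃',
        s.comm' (x := y) (y := x), s.comm' (x := z) (y := x), s.comm' (x := w) (y := x),
        s.comm' (x := z) (y := y), s.comm' (x := w) (y := y), s.comm' (x := w) (y := z),
        s.comm' (x := y') (y := x'), s.comm' (x := z') (y := x'), s.comm' (x := w') (y := x'),
        s.comm' (x := z') (y := y'), s.comm' (x := w') (y := y'), s.comm' (x := w') (y := z')],
      by simp, by simp⟩
  exact ⟨σ, τ, ha, hx 0, hx 1, hx 2, hx 3⟩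

/-- Some left clique has at least three vertices. -/
def HasTriangle (s : Setoid R) : Prop :=
  ∃ x y z, x ≠ y ∧ x ≠ z ∧ y ≠ z ∧ s x y ∧ s x z

theorem Basic.exists_splits_only_second (h : Basic s t E) (hT : HasTriangle s) {x y z w : R}
    (hxy : x ≠ y) (hzw : z ≠ w) (hsxy : s x y) (hszw : s z w) (hsxz : ¬ s x z) :
    ∃ b, (E x b ↔ E y b) ∧ ¬ (E z b ↔ E w b) := by
  obtain ⟨r₁, r₂, r₃, h₁₂, h₁₃, h₂₃, hs₁₂, hs₁₃⟩ := hT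
  have hedge : ∃ r r', r ≠ r' ∧ s r r' := ⟨r₁, r₂, h₁₂, hs₁₂⟩
  obtain ⟨b, -⟩ := h.two_right
  obtain ⟨a, a', hne, hs, hE⟩ : ∃ a a', a ≠ a' ∧ s a a' ∧ (E a b ↔ E a' b) := by
    by_cases e₁ : E r₁ b ↔ E r₂ b
    · exact ⟨_, _, h₁₂, hs₁₂, e₁⟩
    by_cases e₂ : E r₁ b ↔ E r₃ b
    · exact ⟨_, _, h₁₃, hs₁₃, e₂⟩
    exact ⟨_, _, h₂₃, s.trans (s.symm hs₁₂) hs₁₃, by tauto⟩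
  obtain ⟨c, hc⟩ := h.exists_not_rel a
  obtain ⟨u, hu, hub⟩ := h.exists_adj hedge c b
  obtain ⟨v, hv, hvb⟩ := h.exists_not_adj hedge c b
  obtain ⟨σ, τ, ha, rfl, rfl, rfl, rfl⟩ := h.hom.exists_aut_left_edges hne
    (fun hc : u = v => hvb (hc ▸ hub)) hs (s.trans (s.symm hu) hv)
    (fun hau => hc (s.trans hau (s.symm hu))) hxy hzw hsxy hszw hsxz
  exact ⟨τ b, by simp only [ha.cross, hE], by simp [ha.cross, hub, hvb]⟩

theorem Basic.exists_ne_rel (h : Basic s t E) (hedge : ∃ r r', r ≠ r' ∧ s r r') (r : R) :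
    ∃ r', r ≠ r' ∧ s r r' := by
  obtain ⟨x, y, hxy, hs⟩ := hedge
  obtain ⟨σ, τ, ha, rfl⟩ := h.hom.exists_aut_left x r
  exact ⟨σ y, by simpa using hxy, (ha.rel_left _ _).2 hs⟩

theorem Balanced.agree_iff (h : Balanced s t E) {r r' : R} (hs : s r r') {b b' : B}
    (ht : t b b') : (E r b ↔ E r' b) ↔ (E r b' ↔ E r' b') := by
  have := h r r' b b' hs ht
  tauto

/-- There are infinitely many right cliques. -/
theorem Tame.infinite_quotient (h : Tame s t E)
    (hbig : HasTriangle s ∨ ∀ b b', t b b' → b = b') : Infinite (Quotient t) := by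
  by_contra hfin
  have : Finite (Quotient t) := not_infinite_iff_finite.1 hfin
  have hout : ∀ b : B, t (Quotient.mk t b).out b := fun b => Quotient.mk_out b
  have hinf : Infinite R := by
    by_contra hR
    have : Finite R := not_infinite_iff_finite.1 hR
    have hB : Infinite B := h.inf.resolve_left hR
    obtain ⟨b, b', hne, hb⟩ := Finite.exists_ne_map_eq_of_infinite
      (fun b : B => ((Quotient.mk t b, {r | E r b}) : Quotient t × Set R))
    simp only [Prod.mk.injEq] at hb
    exact hne (h.twin_right b b' (Quotient.exact hb.1) fun r => Set.ext_iff.1 hb.2 r)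
  choose φ hφ hsφ using h.exists_ne_rel h.edge
  obtain ⟨r, r', hne, hr⟩ := Finite.exists_ne_map_eq_of_infinite
    (fun r : R => (({q | E r q.out}, {q | E (φ r) q.out}) : Set (Quotient t) × Set (Quotient t)))
  simp only [Prod.mk.injEq, Set.ext_iff, Set.mem_ofPred_eq] at hr
  obtain ⟨hr₁, hr₂⟩ := hr
  by_cases hs : s r r'
  · exact hne (h.twin_left r r' hs fun b => (h.balanced.agree_iff hs (hout b)).1 (hr₁ _))
  · rcases hbig with hT | ht
    · obtain ⟨b, hb, hb'⟩ :=
        h.exists_splits_only_second hT (hφ r) (hφ r') (hsφ r) (hsφ r') hs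
      have e₁ := h.balanced.agree_iff (hsφ r) (hout b)
      have e₂ := h.balanced.agree_iff (hsφ r') (hout b)
      have e₃ := hr₁ (Quotient.mk t b)
      have e₄ := hr₂ (Quotient.mk t b)
      exact hb' (e₂.1 (e₃.symm.trans ((e₁.2 hb).trans e₄)))
    · obtain ⟨b, hb, hb'⟩ := h.exists_distinguish h.edge hs
      have := hr₁ (Quotient.mk t b)
      rw [ht _ _ (hout b)] at this
      exact hb' (this.1 hb)

/-- A left edge together with a common neighbor; this is the graph `T_r`. -/
def HasTwoNbrs (s : Setoid R) (E : R → B → Prop) : Prop :=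
  ∃ r r' b, r ≠ r' ∧ s r r' ∧ E r b ∧ E r' b

theorem Tame.hasTriangle (h : Tame s t E) (hT : HasTwoNbrs s E) : HasTriangle s := by
  obtain ⟨x, y, b, hne, hs, hx, hy⟩ := hT
  obtain ⟨z, hz, hzb⟩ := h.exists_not_adj h.edge x b
  exact ⟨x, y, z, hne, fun hc => hzb (hc ▸ hx), fun hc => hzb (hc ▸ hy), hs, hz⟩

/-- If a vertex has two neighbors in some clique of the other color, then it has infinitely many
in each such clique. -/
theorem Tame.infinite_adj (h : Tame s t E) (hT : HasTwoNbrs s E) (r : R) (b : B) :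
    {r' | s r r' ∧ E r' b}.Infinite := by
  have : Infinite (Quotient t) := h.infinite_quotient (Or.inl (h.hasTriangle hT))
  intro hfin'
  obtain ⟨ρ, hρ, hρb⟩ := h.exists_adj h.edge r b
  set P : Set R := {r' | s ρ r' ∧ E r' b} with hP
  have hfin : P.Finite := hfin'.subset fun x hx => ⟨s.trans hρ hx.1, hx.2⟩
  have hρP : ρ ∈ P := ⟨s.refl _, hρb⟩
  obtain ⟨x, y, b₀, hne, hxy, hx, hy⟩ := hT
  obtain ⟨y', hy', hy'ne⟩ : ∃ y' ∈ P, y' ≠ ρ := by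
    obtain ⟨σ, τ, ha, rfl, rfl⟩ := h.hom.exists_aut_cross (r := x) (r' := ρ) (b := b₀) (b' := b)
      (by simp [hx, hρb])
    exact ⟨σ y, ⟨(ha.rel_left _ _).2 hxy, (ha.cross _ _).2 hy⟩, by simpa using hne.symm⟩
  obtain ⟨w, hw, hwb⟩ := h.exists_not_adj h.edge ρ b
  have ne_of_not : ∀ {b' : B}, ¬ t b b' → b ≠ b' := fun hb hc => hb (hc ▸ t.refl _)
  obtain ⟨b₂, hρb₂, hwb₂⟩ : ∃ b₂, E ρ b₂ ∧ E w b₂ := by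
    obtain ⟨σ, τ, ha, hσ, rfl⟩ := h.hom.exists_aut_left_pair (r₁ := ρ) (r₂ := y') (r₁' := ρ)
      (r₂' := w) hy'ne.symm (fun hc => hwb (hc ▸ hρb)) (by simp [hw, hy'.1])
    exact ⟨τ b, by simpa [hσ] using (ha.cross ρ b).2 hρb, (ha.cross _ _).2 hy'.2⟩
  have htb₂ : ¬ t b b₂ := fun ht => by
    have := h.balanced ρ w b b₂ hw ht
    tauto
  rcases Set.finite_or_infinite {r' | s ρ r'} with hK | hK
  · have : Finite {r' | s ρ r'} := hK
    obtain ⟨q, q', hqq', hq⟩ := Finite.exists_ne_map_eq_of_infinite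
      (fun q : Quotient t => {k : {r' | s ρ r'} | E k q.out})
    simp only [Set.ext_iff, Set.mem_ofPred_eq, Subtype.forall] at hq
    have hqt : ¬ t q.out q'.out := fun hc => hqq' (Quotient.out_equiv_out.1 hc)
    obtain ⟨r₁, hr₁, hr₁q⟩ := h.exists_adj h.edge ρ q.out
    obtain ⟨σ, τ, ha, hσ, hτ⟩ := h.hom.exists_aut_cross (r := r₁) (r' := ρ) (b := q.out) (b' := b)
      (by simp [hr₁q, hρb])
    have hagree : ∀ u, s ρ u → (E u b ↔ E u (τ q'.out)) := by
      intro u hu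
      obtain ⟨v, rfl⟩ := σ.surjective u
      rw [← hσ, ha.rel_left] at hu
      rw [← hτ, ha.cross, ha.cross]
      exact hq v (s.trans hr₁ hu)
    have htb' : ¬ t b (τ q'.out) := by rwa [← hτ, ha.rel_right]
    obtain ⟨σ', τ', ha', hσ', hτ', hτ'₂⟩ := h.hom.exists_aut_left_right_pair (r := ρ) (r' := ρ)
      (ne_of_not htb') (ne_of_not htb₂) (by simp [htb', htb₂]) Iff.rfl
      (by simp [hρb₂, ← hagree ρ (s.refl _), hρb])
    obtain ⟨v, rfl⟩ := σ'.surjective w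
    have hv : s ρ v := by rwa [← hσ', ha'.rel_left] at hw
    rw [← hτ', ha'.cross, hagree v hv] at hwb
    rw [← hτ'₂, ha'.cross] at hwb₂
    exact hwb hwb₂
  · have : Finite P := hfin
    have : Infinite ↥({r' | s ρ r'} \ P) := (hK.sdiff hfin).to_subtype
    obtain ⟨g⟩ := nonempty_embedding_of_finite_of_infinite P ↥({r' | s ρ r'} \ P)
    obtain ⟨σ, τ, ha, hσ, -⟩ := h.hom P Empty (fun u => u.1) (fun u => (g u).1)
      Empty.elim Empty.elim
      ⟨fun i j => by simp [← Subtype.ext_iff], by simp,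
        fun i j => iff_of_true (s.trans (s.symm i.2.1) j.2.1)
          (s.trans (s.symm (g i).2.1) (g j).2.1), by simp, by simp⟩
    have himg : ∀ u, s ρ u → E u (τ b) → ∃ i : P, u = g i := by
      intro u hu hub
      obtain ⟨v, rfl⟩ := σ.surjective u
      have hv : s ρ v := by
        rw [← ha.rel_left, hσ ⟨ρ, hρP⟩]
        exact s.trans (s.symm (g _).2.1) hu
      exact ⟨⟨v, hv, (ha.cross _ _).1 hub⟩, hσ ⟨v, hv, (ha.cross _ _).1 hub⟩⟩
    have hdisj : ∀ u, s ρ u → E u b → ¬ E u (τ b) := by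
      intro u hu hub hub'
      obtain ⟨i, rfl⟩ := himg u hu hub'
      exact (g i).2.2 ⟨hu, hub⟩
    set y₀ : R := (g ⟨ρ, hρP⟩).1 with hy₀
    have hsy₀ : s ρ y₀ := (g ⟨ρ, hρP⟩).2.1
    have hy₀b : E y₀ (τ b) := by
      rw [hy₀, ← hσ ⟨ρ, hρP⟩]
      exact (ha.cross _ _).2 hρb
    have hy₀b' : ¬ E y₀ b := fun hc => hdisj _ hsy₀ hc hy₀b
    have htb' : ¬ t b (τ b) := by
      intro ht
      refine hK ((hfin.union (Set.finite_range fun i => (g i).1)).subset fun u hu => ?_)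
      have := h.balanced y₀ u b (τ b) (s.trans (s.symm hsy₀) hu) ht
      by_cases hub : E u b
      · exact Or.inl ⟨hu, hub⟩
      · obtain ⟨i, rfl⟩ := himg u hu (by tauto)
        exact Or.inr ⟨i, rfl⟩
    obtain ⟨σ', τ', ha', hσ', hτ', hτ'₂⟩ := h.hom.exists_aut_left_right_pair (r := w) (r' := y₀)
      (ne_of_not htb₂) (ne_of_not htb') (by simp [htb', htb₂]) (by simp [hwb, hy₀b'])
      (by simp [hwb₂, hy₀b])
    refine hdisj (σ' ρ) ?_ ?_ ?_
    · refine s.trans hsy₀ (s.symm ?_)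
      rw [← hσ']
      exact (ha'.rel_left ρ w).2 hw
    · rw [← hτ', ha'.cross]
      exact hρb
    · rw [← hτ'₂, ha'.cross]
      exact hρb₂

/-- A finite set of right cliques can be moved away from any other one by an automorphism that
fixes finitely many left vertices. -/
theorem Homogeneous.exists_aut_avoid (h : Homogeneous s t E) (F : Finset R) (e : R → Prop)
    (hinf : (Quotient.mk t '' {b | ∀ r ∈ F, (E r b ↔ e r)}).Infinite) (r₁ : R)
    (hfin : (Quotient.mk t '' {b | (∀ r ∈ F, (E r b ↔ e r)) ∧ E r₁ b}).Finite)
    {T : Set (Quotient t)} (hT : T.Finite) :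
    ∃ σ τ, IsAut s t E σ τ ∧ (∀ r ∈ F, σ r = r) ∧
      ∀ b, (∀ r ∈ F, (E r b ↔ e r)) → E (σ r₁) b → Quotient.mk t b ∉ T := by
  set Q := Quotient.mk t '' {b | (∀ r ∈ F, (E r b ↔ e r)) ∧ E r₁ b} with hQ
  set Z := Quotient.mk t '' {b | ∀ r ∈ F, (E r b ↔ e r)} with hZ
  have : Finite Q := hfin
  have : Infinite ↥(Z \ T) := (hinf.sdiff hT).to_subtype
  obtain ⟨g⟩ := nonempty_embedding_of_finite_of_infinite Q ↥(Z \ T)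
  choose c hc hcq using fun q : Q => q.2
  choose d hd hdq using fun q : Q => (g q).2.1
  have hct : ∀ i j, t (c i) (c j) ↔ i = j := fun i j => by
    rw [← Quotient.eq (r := t), hcq, hcq, Subtype.ext_iff]
  have hdt : ∀ i j, t (d i) (d j) ↔ i = j := fun i j => by
    rw [← Quotient.eq (r := t), hdq, hdq, ← Subtype.ext_iff, g.apply_eq_iff_eq]
  have hci : ∀ i j, c i = c j ↔ i = j := fun i j =>
    ⟨fun hij => (hct i j).1 (hij ▸ t.refl _), fun hij => hij ▸ rfl⟩
  have hdi : ∀ i j, d i = d j ↔ i = j := fun i j =>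
    ⟨fun hij => (hdt i j).1 (hij ▸ t.refl _), fun hij => hij ▸ rfl⟩
  obtain ⟨σ, τ, ha, hσ, hτ⟩ := h F Q (fun u => u.1) (fun u => u.1) c d
    ⟨fun _ _ => Iff.rfl, fun i j => by rw [hci, hdi], fun _ _ => Iff.rfl,
      fun i j => by rw [hct, hdt], fun i j => by rw [(hc j).1 _ i.2, hd j _ i.2]⟩
  refine ⟨σ, τ, ha, fun r hr => hσ ⟨r, hr⟩, fun b hb hr₁ => ?_⟩
  obtain ⟨b₀, rfl⟩ := τ.surjective b
  have hb₀ : Quotient.mk t b₀ ∈ Q := by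
    refine ⟨b₀, ⟨fun r hr => ?_, (ha.cross _ _).1 hr₁⟩, rfl⟩
    rw [← hb r hr, ← ha.cross r, hσ ⟨r, hr⟩]
  have : Quotient.mk t (τ b₀) = g ⟨_, hb₀⟩ := by
    rw [← hdq, ← hτ, Quotient.eq, ha.rel_right, ← Quotient.eq (r := t), hcq]
  rw [this]
  exact (g _).2.2

/-- Every left vertex has neighbors in infinitely many right cliques. -/
theorem Tame.infinite_nbr (h : Tame s t E) [hq : Infinite (Quotient t)] (r : R) :
    (Quotient.mk t '' {b | E r b}).Infinite := by
  by_cases hedge : ∃ b b', b ≠ b' ∧ t b b'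
  · convert Set.infinite_univ (α := Quotient t)
    refine Set.eq_univ_of_forall fun q => ?_
    obtain ⟨b, hb, hbr⟩ := (h.flip hedge).exists_adj hedge q.out r
    exact ⟨b, hbr, by rw [← Quotient.out_eq q]; exact Quotient.sound (t.symm hb)⟩
  have ht : ∀ b b', t b b' → b = b' := fun b b' hb => by
    by_contra hne
    exact hedge ⟨b, b', hne, hb⟩
  have : Infinite B := Infinite.of_surjective (Quotient.mk t) Quotient.mk_surjective
  intro hfin
  obtain ⟨r₀, hr₀⟩ := h.exists_not_rel r
  obtain ⟨b₁, hb₁, hb₁'⟩ := h.exists_common h.edge hr₀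
  obtain ⟨b₂, hb₂, hb₂'⟩ := h.exists_distinguish h.edge hr₀
  obtain ⟨z, hz', hz⟩ := h.exists_distinguish h.edge (fun hc => hr₀ (s.symm hc))
  have h₁₂ : b₁ ≠ b₂ := fun hc => hb₂' (hc ▸ hb₁')
  have h₁z : b₁ ≠ z := fun hc => hz (hc ▸ hb₁)
  obtain ⟨τ, σ, ha, hτ, hτz⟩ := h.hom.flip.exists_aut_left_pair h₁₂ h₁z
    ⟨fun hc => (h₁₂ (ht _ _ hc)).elim, fun hc => (h₁z (ht _ _ hc)).elim⟩
  have hσb₁ : E (σ r) b₁ := by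
    rw [← hτ]
    exact (ha.cross b₁ r).2 hb₁
  have hσz : E (σ r) z := by
    rw [← hτz]
    exact (ha.cross b₂ r).2 hb₂
  have hne : r ≠ σ r := fun hc => hz (hc ▸ hσz)
  have hfin' : (Quotient.mk t '' {b | E (σ r) b}).Finite := by
    have hN : {b | E r b}.Finite := hfin.of_finite_image fun b _ b' _ hbb' =>
      ht _ _ (Quotient.exact hbb')
    refine ((hN.image τ).subset fun b hb => ?_).image _
    obtain ⟨b', rfl⟩ := τ.surjective b
    exact ⟨b', (ha.cross b' r).1 hb, rfl⟩
  obtain ⟨σ', τ', ha', -, hav⟩ := h.hom.exists_aut_avoid ∅ (fun _ => True)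
    (by simpa using (Set.infinite_range_of_injective (f := Quotient.mk t)
      fun b b' hbb' => ht _ _ (Quotient.exact hbb')))
    r (by simpa using hfin) (hfin.union hfin')
  have hrel : ∀ x, (∀ b, E x b → Quotient.mk t b ∈ Quotient.mk t '' {b | E r b} ∪
      Quotient.mk t '' {b | E (σ r) b}) → s (σ' r) x := by
    intro x hx
    by_contra hs
    obtain ⟨b, hb, hb'⟩ := h.exists_common h.edge hs
    exact hav b (by simp) hb (hx b hb')
  have hs₁ := hrel r fun b hb => Or.inl ⟨b, hb, rfl⟩
  have hs₂ := hrel (σ r) fun b hb => Or.inr ⟨b, hb, rfl⟩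
  have hne' : r ≠ σ' r := fun hc => hav b₁ (by simp) (hc ▸ hb₁) (Or.inl ⟨b₁, hb₁, rfl⟩)
  obtain ⟨σ₂, τ₂, ha₂, hσ₂, hσ₂'⟩ := h.hom.exists_aut_left_pair hne hne'
    (iff_of_true (s.trans (s.symm hs₁) hs₂) (s.symm hs₁))
  have e₁ := (ha₂.cross r b₁).2 hb₁
  have e₂ := (ha₂.cross (σ r) b₁).2 hσb₁
  rw [hσ₂] at e₁
  rw [hσ₂'] at e₂
  exact hav _ (by simp) e₂ (Or.inl ⟨_, e₁, rfl⟩)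

theorem Tame.exists_forall_adj (h : Tame s t E) (hT : HasTwoNbrs s E) (F : Finset R)
    (hF : ∀ r ∈ F, ∀ r' ∈ F, s r r') : ∃ b, ∀ r ∈ F, E r b := by
  obtain ⟨b, -⟩ := h.two_right
  rcases F.eq_empty_or_nonempty with rfl | ⟨r, hr⟩
  · exact ⟨b, by simp⟩
  have : Infinite {r' | s r r' ∧ E r' b} := (h.infinite_adj hT r b).to_subtype
  obtain ⟨g⟩ := nonempty_embedding_of_finite_of_infinite F {r' | s r r' ∧ E r' b}
  obtain ⟨σ, τ, ha, hσ, -⟩ := h.hom F Empty (fun u => (g u).1) (fun u => u.1)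
    Empty.elim Empty.elim
    ⟨fun i j => by simp [← Subtype.ext_iff], by simp,
      fun i j => iff_of_true (s.trans (s.symm (g i).2.1) (g j).2.1) (hF _ i.2 _ j.2),
      by simp, by simp⟩
  refine ⟨τ b, fun r hr => ?_⟩
  have := (ha.cross _ b).2 (g ⟨r, hr⟩).2.2
  rwa [hσ] at this

/-- The common neighbors of a finite set of pairwise adjacent left vertices meet infinitely many
right cliques. -/
theorem Tame.infinite_common (h : Tame s t E) (hT : HasTwoNbrs s E) {F : Finset R}
    (hne : F.Nonempty) (hF : ∀ r ∈ F, ∀ r' ∈ F, s r r') :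
    (Quotient.mk t '' {b | ∀ r ∈ F, E r b}).Infinite := by
  have : Infinite (Quotient t) := h.infinite_quotient (Or.inl (h.hasTriangle hT))
  classical
  induction hne using Finset.Nonempty.cons_induction with
  | singleton r => simpa using h.infinite_nbr r
  | cons r F hr hne ih =>
    intro hfin
    have hF' : ∀ r ∈ F, ∀ r' ∈ F, s r r' := fun x hx y hy =>
      hF x (Finset.mem_cons_of_mem hx) y (Finset.mem_cons_of_mem hy)
    have hset : {b | (∀ x ∈ F, (E x b ↔ True)) ∧ E r b} =
        {b | ∀ x ∈ Finset.cons r F hr, E x b} := by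
      ext b
      simp [and_comm]
    obtain ⟨σ, τ, ha, hσ, hav⟩ := h.hom.exists_aut_avoid F (fun _ => True)
      (by simpa using ih hF') r (by rwa [hset]) hfin
    obtain ⟨x, hx⟩ := hne
    have hsx : ∀ y ∈ Finset.cons r F hr, s y (σ r) := by
      intro y hy
      refine s.trans (hF y hy x (Finset.mem_cons_of_mem hx)) ?_
      have := (ha.rel_left x r).2 (hF x (Finset.mem_cons_of_mem hx) r (Finset.mem_cons_self ..))
      rwa [hσ x hx] at this
    obtain ⟨b, hb⟩ := h.exists_forall_adj hT (insert (σ r) (Finset.cons r F hr)) (by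
      intro y hy z hz
      rcases Finset.mem_insert.1 hy with rfl | hy <;> rcases Finset.mem_insert.1 hz with rfl | hz
      · exact s.refl _
      · exact s.symm (hsx z hz)
      · exact hsx y hy
      · exact hF y hy z hz)
    have hb' : ∀ y ∈ Finset.cons r F hr, E y b := fun y hy => hb y (Finset.mem_insert_of_mem hy)
    exact hav b (fun y hy => by simp [hb' y (Finset.mem_cons_of_mem hy)])
      (hb _ (Finset.mem_insert_self ..)) ⟨b, hb', rfl⟩

theorem Tame.finite_split_forces (h : Tame s t E) [Infinite (Quotient t)] {r₁ r₂ : R}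
    (hne : r₁ ≠ r₂) (hs : s r₁ r₂)
    (hfin : (Quotient.mk t '' {b | E r₁ b ∧ ¬ E r₂ b}).Finite) :
    HasTriangle s ∧ ∀ x y z b, x ≠ y → x ≠ z → y ≠ z → s x y → s x z → E x b → E y b → E z b := by
  have hset : {b | (∀ x ∈ ({r₂} : Finset R), (E x b ↔ False)) ∧ E r₁ b} =
      {b | E r₁ b ∧ ¬ E r₂ b} := by
    ext b
    simp [and_comm]
  obtain ⟨σ, τ, ha, hσ, hav⟩ := h.hom.exists_aut_avoid {r₂} (fun _ => False)
    (by simpa using h.compl.infinite_nbr r₂) r₁ (by rwa [hset]) hfin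
  replace hσ : σ r₂ = r₂ := hσ r₂ (by simp)
  replace hav : ∀ b, ¬ E r₂ b → E (σ r₁) b → ¬ E r₁ b := fun b h₂ h₁ h₃ =>
    hav b (by simpa using h₂) h₁ ⟨b, ⟨h₃, h₂⟩, rfl⟩
  obtain ⟨b₀, hb₁, hb₂⟩ : ∃ b, E r₁ b ∧ ¬ E r₂ b := by
    obtain ⟨x, y, b, hxy, hx, hy⟩ := h.exists_cross h.edge
    obtain ⟨σ, τ, ha, rfl, rfl⟩ := h.hom.exists_aut_left_pair (fun hc : x = y => hy (hc ▸ hx)) hne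
      (iff_of_true hxy hs)
    exact ⟨τ b, (ha.cross _ _).2 hx, fun hc => hy ((ha.cross _ _).1 hc)⟩
  have hne₁ : r₁ ≠ σ r₁ := fun hc => hav b₀ hb₂ (hc ▸ hb₁) hb₁
  have hne₂ : σ r₁ ≠ r₂ := fun hc => hne (σ.injective (hc.trans hσ.symm))
  have hs₁ : s r₁ (σ r₁) := by
    have := (ha.rel_left r₁ r₂).2 hs
    rw [hσ] at this
    exact s.trans hs (s.symm this)
  refine ⟨⟨r₁, σ r₁, r₂, hne₁, hne, hne₂, hs₁, hs⟩, fun x y z b hxy hxz hyz sxy sxz hx hy => ?_⟩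
  obtain ⟨σ', τ', ha', hx', hy', hz'⟩ := h.hom.exists_aut_left_triple hxy hxz hyz sxy sxz
    hne₁ hne hne₂ hs₁ hs
  by_contra hz
  refine hav (τ' b) ?_ ?_ ?_
  · rwa [← hz', ha'.cross]
  · rwa [← hy', ha'.cross]
  · rwa [← hx', ha'.cross]

/-- For two adjacent left vertices, infinitely many right cliques contain a neighbor of the first
that is not a neighbor of the second. -/
theorem Tame.infinite_split (h : Tame s t E) [Infinite (Quotient t)] {r₁ r₂ : R}
    (hne : r₁ ≠ r₂) (hs : s r₁ r₂) : (Quotient.mk t '' {b | E r₁ b ∧ ¬ E r₂ b}).Infinite := by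
  intro hfin
  obtain ⟨hT, h₁⟩ := h.finite_split_forces hne hs hfin
  have hset : {b | ¬ E r₂ b ∧ ¬ ¬ E r₁ b} = {b | E r₁ b ∧ ¬ E r₂ b} := by
    ext b
    simp [and_comm]
  obtain ⟨-, h₂⟩ := h.compl.finite_split_forces hne.symm (s.symm hs) (by rwa [hset])
  obtain ⟨x, y, b, hxy, hx, hy⟩ := h.exists_cross h.edge
  obtain ⟨z, hxz, hyz, hz⟩ : ∃ z, x ≠ z ∧ y ≠ z ∧ s x z := by
    obtain ⟨u, v, w, huv, huw, hvw, suv, suw⟩ := hT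
    obtain ⟨σ, τ, ha, rfl, rfl⟩ := h.hom.exists_aut_left_pair huv
      (fun hc : x = y => hy (hc ▸ hx)) (iff_of_true suv hxy)
    exact ⟨σ w, by simpa using huw, by simpa using hvw, (ha.rel_left _ _).2 suw⟩
  have hxy' : x ≠ y := fun hc => hy (hc ▸ hx)
  by_cases hzb : E z b
  · exact hy (h₁ x z y b hxz hxy' hyz.symm hz hxy hx hzb)
  · exact h₂ y z x b hyz hxy'.symm hxz.symm (s.trans (s.symm hxy) hz) (s.symm hxy) hy hzb hx

/-! ### Critical structures: minimally omitted subgraphs -/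

variable {P Q : Type} {sH : Setoid P} {tH : Setoid Q} {EH : P → Q → Prop}

/-- The pair of maps `x`, `y` restricts to an embedding of the substructure on `A`, `C`. -/
structure EmbedsOn (s : Setoid R) (t : Setoid B) (E : R → B → Prop) (sH : Setoid P)
    (tH : Setoid Q) (EH : P → Q → Prop) (A : Set P) (C : Set Q) (x : P → R) (y : Q → B) :
    Prop where
  inj_left : ∀ i ∈ A, ∀ j ∈ A, x i = x j → i = j
  inj_right : ∀ i ∈ C, ∀ j ∈ C, y i = y j → i = j
  rel_left : ∀ i ∈ A, ∀ j ∈ A, (s (x i) (x j) ↔ sH i j)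
  rel_right : ∀ i ∈ C, ∀ j ∈ C, (t (y i) (y j) ↔ tH i j)
  cross : ∀ i ∈ A, ∀ j ∈ C, (E (x i) (y j) ↔ EH i j)

/-- The properties of a minimally omitted subgraph that are used below. -/
structure Critical (s : Setoid R) (t : Setoid B) (E : R → B → Prop) (sH : Setoid P)
    (tH : Setoid Q) (EH : P → Q → Prop) : Prop where
  nonempty_left : Nonempty P
  nonempty_right : Nonempty Q
  omitted : ∀ x y, ¬ EmbedsOn s t E sH tH EH Set.univ Set.univ x y
  delete_left : ∀ i, ∃ x y, EmbedsOn s t E sH tH EH {i}ᶜ Set.univ x y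
  delete_right : ∀ j, ∃ x y, EmbedsOn s t E sH tH EH Set.univ {j}ᶜ x y
  left : ∃ x : P → R, Function.Injective x ∧ ∀ i j, s (x i) (x j) ↔ sH i j
  right : ∃ y : Q → B, Function.Injective y ∧ ∀ i j, t (y i) (y j) ↔ tH i j
  balanced : Balanced sH tH EH
  adj_left : HasTwoNbrs sH EH → HasTwoNbrs s E
  not_adj_left : HasTwoNbrs sH (fun i j => ¬ EH i j) → HasTwoNbrs s (fun r b => ¬ E r b)
  adj_right : HasTwoNbrs tH (fun j i => EH i j) → HasTwoNbrs t (fun b r => E r b)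
  not_adj_right :
    HasTwoNbrs tH (fun j i => ¬ EH i j) → HasTwoNbrs t (fun b r => ¬ E r b)

theorem EmbedsOn.flip {A : Set P} {C : Set Q} {x : P → R} {y : Q → B}
    (h : EmbedsOn s t E sH tH EH A C x y) :
    EmbedsOn t s (fun b r => E r b) tH sH (fun j i => EH i j) C A y x :=
  ⟨h.inj_right, h.inj_left, h.rel_right, h.rel_left, fun j hj i hi => h.cross i hi j hj⟩

theorem EmbedsOn.mono {A A' : Set P} {C C' : Set Q} {x : P → R} {y : Q → B}
    (h : EmbedsOn s t E sH tH EH A C x y) (hA : ∀ i ∈ A', i ∈ A) (hC : ∀ j ∈ C', j ∈ C) :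
    EmbedsOn s t E sH tH EH A' C' x y :=
  ⟨fun i hi j hj => h.inj_left i (hA i hi) j (hA j hj),
    fun i hi j hj => h.inj_right i (hC i hi) j (hC j hj),
    fun i hi j hj => h.rel_left i (hA i hi) j (hA j hj),
    fun i hi j hj => h.rel_right i (hC i hi) j (hC j hj),
    fun i hi j hj => h.cross i (hA i hi) j (hC j hj)⟩

theorem Critical.flip (c : Critical s t E sH tH EH) :
    Critical t s (fun b r => E r b) tH sH (fun j i => EH i j) where
  nonempty_left := c.nonempty_right
  nonempty_right := c.nonempty_left
  omitted x y hxy := c.omitted y x hxy.flip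
  delete_left j := by
    obtain ⟨x, y, h⟩ := c.delete_right j
    exact ⟨y, x, h.flip⟩
  delete_right i := by
    obtain ⟨x, y, h⟩ := c.delete_left i
    exact ⟨y, x, h.flip⟩
  left := c.right
  right := c.left
  balanced := c.balanced.flip
  adj_left := c.adj_right
  not_adj_left := c.not_adj_right
  adj_right := c.adj_left
  not_adj_right := c.not_adj_left

/-- Amalgamating the two embeddings obtained by deleting one of two left vertices. -/
theorem Critical.exists_amalgam [Finite P] [Finite Q] (c : Critical s t E sH tH EH)
    (h : Homogeneous s t E) {i j : P} (hij : i ≠ j) :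
    ∃ x y, EmbedsOn s t E sH tH EH {i}ᶜ Set.univ x y ∧ EmbedsOn s t E sH tH EH {j}ᶜ Set.univ x y ∧
      ((s (x i) (x j) ↔ sH i j) → x i = x j) := by
  classical
  obtain ⟨x₁, y₁, h₁⟩ := c.delete_left i
  obtain ⟨x₂, y₂, h₂⟩ := c.delete_left j
  have u : ∀ q : Q, q ∈ Set.univ := Set.mem_univ
  have mi : ∀ k : {k // k ≠ i ∧ k ≠ j}, k.1 ∈ ({i}ᶜ : Set P) := fun k => k.2.1
  have mj : ∀ k : {k // k ≠ i ∧ k ≠ j}, k.1 ∈ ({j}ᶜ : Set P) := fun k => k.2.2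
  obtain ⟨σ, τ, ha, hσ, hτ⟩ := h {k // k ≠ i ∧ k ≠ j} Q (fun k => x₂ k.1) (fun k => x₁ k.1) y₂ y₁
    ⟨fun k l => ⟨fun hkl => by rw [h₂.inj_left _ (mj k) _ (mj l) hkl],
        fun hkl => by rw [h₁.inj_left _ (mi k) _ (mi l) hkl]⟩,
      fun k l => ⟨fun hkl => by rw [h₂.inj_right _ (u k) _ (u l) hkl],
        fun hkl => by rw [h₁.inj_right _ (u k) _ (u l) hkl]⟩,
      fun k l => by rw [h₂.rel_left _ (mj k) _ (mj l), h₁.rel_left _ (mi k) _ (mi l)],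
      fun k l => by rw [h₂.rel_right _ (u k) _ (u l), h₁.rel_right _ (u k) _ (u l)],
      fun k l => by rw [h₂.cross _ (mj k) _ (u l), h₁.cross _ (mi k) _ (u l)]⟩
  set x : P → R := fun k => if k = i then σ (x₂ i) else x₁ k with hx
  have hxi : ∀ k ∈ ({i}ᶜ : Set P), x k = x₁ k := fun k hk => if_neg hk
  have hxj : ∀ k ∈ ({j}ᶜ : Set P), x k = σ (x₂ k) := by
    intro k hk
    by_cases hki : k = i
    · simp [hx, hki]
    · rw [hxi k hki]
      exact (hσ ⟨k, hki, hk⟩).symm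
  have ei : EmbedsOn s t E sH tH EH {i}ᶜ Set.univ x y₁ :=
    ⟨fun k hk l hl => by rw [hxi k hk, hxi l hl]; exact h₁.inj_left k hk l hl, h₁.inj_right,
      fun k hk l hl => by rw [hxi k hk, hxi l hl]; exact h₁.rel_left k hk l hl, h₁.rel_right,
      fun k hk q hq => by rw [hxi k hk]; exact h₁.cross k hk q hq⟩
  have ej : EmbedsOn s t E sH tH EH {j}ᶜ Set.univ x y₁ :=
    ⟨fun k hk l hl => by
        rw [hxj k hk, hxj l hl, σ.apply_eq_iff_eq]; exact h₂.inj_left k hk l hl, h₁.inj_right,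
      fun k hk l hl => by rw [hxj k hk, hxj l hl, ha.rel_left]; exact h₂.rel_left k hk l hl,
      h₁.rel_right,
      fun k hk q hq => by rw [hxj k hk, ← hτ, ha.cross]; exact h₂.cross k hk q hq⟩
  refine ⟨x, y₁, ei, ej, fun hs => ?_⟩
  by_contra hne
  have hpair : ∀ k l, (k ∈ ({i}ᶜ : Set P) ∧ l ∈ ({i}ᶜ : Set P)) ∨
      (k ∈ ({j}ᶜ : Set P) ∧ l ∈ ({j}ᶜ : Set P)) ∨ (k = i ∧ l = j) ∨ (k = j ∧ l = i) := by
    intro k l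
    simp only [Set.mem_compl_iff, Set.mem_singleton_iff]
    grind
  refine c.omitted x y₁ ⟨fun k _ l _ hkl => ?_, ei.inj_right, fun k _ l _ => ?_, ei.rel_right,
    fun k _ q hq => ?_⟩
  · rcases hpair k l with ⟨hk, hl⟩ | ⟨hk, hl⟩ | ⟨rfl, rfl⟩ | ⟨rfl, rfl⟩
    · exact ei.inj_left k hk l hl hkl
    · exact ej.inj_left k hk l hl hkl
    · exact (hne hkl).elim
    · exact (hne hkl.symm).elim
  · rcases hpair k l with ⟨hk, hl⟩ | ⟨hk, hl⟩ | ⟨rfl, rfl⟩ | ⟨rfl, rfl⟩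
    · exact ei.rel_left k hk l hl
    · exact ej.rel_left k hk l hl
    · exact hs
    · rw [s.comm', hs, sH.comm']
  · by_cases hk : k = i
    · exact ej.cross k (by simp [hk, hij]) q hq
    · exact ei.cross k hk q hq

section Finite

variable [Finite P] [Finite Q]

/-- In a left clique with at least three vertices all vertices are twins. -/
theorem Critical.twins (c : Critical s t E sH tH EH) (h : Homogeneous s t E) {i j k : P}
    (hij : i ≠ j) (hki : k ≠ i) (hkj : k ≠ j) (hik : sH i k) (hjk : sH j k) (q : Q) :
    EH i q ↔ EH j q := by
  obtain ⟨x, y, ei, ej, hx⟩ := c.exists_amalgam h hij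
  have h₁ := (ej.rel_left i hij k hkj).2 hik
  have h₂ := (ei.rel_left j hij.symm k hki).2 hjk
  have := hx (iff_of_true (s.trans h₁ (s.symm h₂)) (sH.trans hik (sH.symm hjk)))
  rw [← ej.cross i hij q (Set.mem_univ q), ← ei.cross j hij.symm q (Set.mem_univ q), this]

/-- The left color class is a clique or an independent set. -/
theorem Critical.rel_of_edge (c : Critical s t E sH tH EH) (h : Homogeneous s t E) {i k : P}
    (hik : i ≠ k) (hs : sH i k) (j : P) : sH i j := by
  by_contra hj
  have hij : i ≠ j := fun hc => hj (hc ▸ sH.refl _)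
  have hkj : k ≠ j := fun hc => hj (hc ▸ hs)
  obtain ⟨x, y, ei, ej, hx⟩ := c.exists_amalgam h hij
  have h₁ := (ej.rel_left i hij k hkj).2 hs
  have h₂ : ¬ s (x k) (x j) := fun hc =>
    hj (sH.trans hs ((ei.rel_left k hik.symm j hij.symm).1 hc))
  have h₃ : ¬ s (x i) (x j) := fun hc => h₂ (s.trans (s.symm h₁) hc)
  exact h₃ (hx (iff_of_false h₃ hj) ▸ s.refl _)

theorem Critical.eq_of_rel (c : Critical s t E sH tH EH) (h : Homogeneous s t E)
    (hP : ¬ ∀ i j, sH i j) (i j : P) (hij : sH i j) : i = j := by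
  by_contra hne
  have := c.rel_of_edge h hne hij
  exact hP fun k l => sH.trans (sH.symm (this k)) (this l)

/-- Two vertices of different right cliques can be embedded into the same right clique, keeping
their neighborhoods. -/
theorem Critical.exists_columns (c : Critical s t E sH tH EH) (h : Homogeneous s t E) {q q' : Q}
    (hq : ¬ tH q q') : ∃ (x : P → R) (b b' : B), t b b' ∧ (∀ i j, s (x i) (x j) ↔ sH i j) ∧
      (∀ i, E (x i) b ↔ EH i q) ∧ ∀ i, E (x i) b' ↔ EH i q' := by
  have hne : q ≠ q' := fun hc => hq (hc ▸ tH.refl _)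
  obtain ⟨y, x, e₁, e₂, hy⟩ := c.flip.exists_amalgam h.flip hne
  refine ⟨x, y q, y q', ?_, fun i j => e₁.rel_right i trivial j trivial,
    fun i => e₂.cross q hne i trivial, fun i => e₁.cross q' hne.symm i trivial⟩
  by_contra hc
  exact hc (hy (iff_of_false hc hq) ▸ t.refl _)

theorem Critical.column_agree (c : Critical s t E sH tH EH) (h : Homogeneous s t E)
    (hb : Balanced s t E) {q q' : Q} (hq : ¬ tH q q') {p p' : P} (hp : sH p p') :
    (EH p q ↔ EH p q') ↔ (EH p' q ↔ EH p' q') := by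
  obtain ⟨x, b, b', hbb', hx, h₁, h₂⟩ := c.exists_columns h hq
  have := hb (x p) (x p') b b' ((hx p p').2 hp) hbb'
  rwa [h₁, h₂, h₁, h₂] at this

theorem Critical.column_eq (c : Critical s t E sH tH EH) (h : Homogeneous s t E)
    (ht : ∀ b b', t b b' → b = b') {q q' : Q} (hq : ¬ tH q q') (p : P) :
    EH p q ↔ EH p q' := by
  obtain ⟨x, b, b', hbb', hx, h₁, h₂⟩ := c.exists_columns h hq
  rw [← h₁, ← h₂, ht b b' hbb']

end Finite

theorem exists_injOn {S : Set R} (hne : S.Nonempty) [Finite P] (A : P → Prop)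
    (hS : (∃ i j, i ≠ j ∧ A i ∧ A j) → S.Infinite) :
    ∃ f : P → R, (∀ i, A i → f i ∈ S) ∧ ∀ i j, A i → A j → f i = f j → i = j := by
  by_cases hA : ∃ i j, i ≠ j ∧ A i ∧ A j
  · have : Infinite S := (hS hA).to_subtype
    obtain ⟨g⟩ := nonempty_embedding_of_finite_of_infinite P S
    exact ⟨fun i => g i, fun i _ => (g i).2, fun i j _ _ hij => g.injective (Subtype.ext hij)⟩
  · obtain ⟨r, hr⟩ := hne
    refine ⟨fun _ => r, fun _ _ => hr, fun i j hi hj _ => ?_⟩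
    by_contra hij
    exact hA ⟨i, j, hij, hi, hj⟩

theorem Basic.exists_iff (h : Basic s t E) (hedge : ∃ r r', r ≠ r' ∧ s r r') (r : R) (b : B)
    (p : Prop) : ∃ r', s r r' ∧ (E r' b ↔ p) := by
  by_cases hp : p
  · simpa [hp] using h.exists_adj hedge r b
  · simpa [hp] using h.exists_not_adj hedge r b

/-- A finite pattern of adjacencies to a right vertex is realized in every left clique. -/
theorem Tame.exists_clique_pattern (h : Tame s t E) [Finite P] (e : P → Prop) (r : R) (b : B)
    (h₁ : (∃ i j, i ≠ j ∧ e i ∧ e j) → HasTwoNbrs s E)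
    (h₂ : (∃ i j, i ≠ j ∧ ¬ e i ∧ ¬ e j) → HasTwoNbrs s (fun r b => ¬ E r b)) :
    ∃ x : P → R, Function.Injective x ∧ ∀ i, s r (x i) ∧ (E (x i) b ↔ e i) := by
  classical
  obtain ⟨f, hf, hf'⟩ := exists_injOn (S := {r' | s r r' ∧ E r' b}) (h.exists_adj h.edge r b) e
    fun he => h.infinite_adj (h₁ he) r b
  obtain ⟨g, hg, hg'⟩ := exists_injOn (S := {r' | s r r' ∧ ¬ E r' b}) (h.exists_not_adj h.edge r b)
    (fun i => ¬ e i) fun he => h.compl.infinite_adj (h₂ he) r b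
  have hE : ∀ i, s r (if e i then f i else g i) ∧ (E (if e i then f i else g i) b ↔ e i) := by
    intro i
    split_ifs with hi
    · exact ⟨(hf i hi).1, iff_of_true (hf i hi).2 hi⟩
    · exact ⟨(hg i hi).1, iff_of_false (hg i hi).2 hi⟩
  refine ⟨fun i => if e i then f i else g i, fun i j hij => ?_, hE⟩
  have hij' : (if e i then f i else g i) = if e j then f j else g j := hij
  have he : e i ↔ e j := by rw [← (hE i).2, ← (hE j).2, hij']
  by_cases hi : e i
  · rw [if_pos hi, if_pos (he.1 hi)] at hij'
    exact hf' i j hi (he.1 hi) hij'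
  · rw [if_neg hi, if_neg (fun hj => hi (he.2 hj))] at hij'
    exact hg' i j hi (fun hj => hi (he.2 hj)) hij'

theorem Critical.eq_of_rel_right_of_no_edge (c : Critical s t E sH tH EH)
    (ht : ¬ ∃ b b', b ≠ b' ∧ t b b') (q q' : Q) (hq : tH q q') : q = q' := by
  obtain ⟨y, hy, hy'⟩ := c.right
  exact hy (eq_of_rel_of_no_edge ht _ _ ((hy' q q').2 hq))

/-- A critical structure does not consist of two cliques. -/
theorem Critical.not_two_cliques [Finite P] [Finite Q] (c : Critical s t E sH tH EH)
    (h : Tame s t E) (hP : ∀ i j, sH i j) (hQ : ∀ i j, tH i j) : False := by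
  obtain ⟨p₀⟩ := c.nonempty_left
  obtain ⟨q₀⟩ := c.nonempty_right
  obtain ⟨r, -⟩ := h.two_left
  obtain ⟨b, -⟩ := h.two_right
  obtain ⟨x, hx, hxb⟩ := h.exists_clique_pattern (fun p => EH p q₀) r b
    (fun ⟨i, j, hij, hi, hj⟩ => c.adj_left ⟨i, j, q₀, hij, hP i j, hi, hj⟩)
    (fun ⟨i, j, hij, hi, hj⟩ => c.not_adj_left ⟨i, j, q₀, hij, hP i j, hi, hj⟩)
  obtain ⟨y, hy, hyb⟩ : ∃ y : Q → B, Function.Injective y ∧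
      ∀ q, t b (y q) ∧ (E (x p₀) (y q) ↔ EH p₀ q) := by
    by_cases hedge : ∃ b b', b ≠ b' ∧ t b b'
    · exact (h.flip hedge).exists_clique_pattern (fun q => EH p₀ q) b (x p₀)
        (fun ⟨i, j, hij, hi, hj⟩ => c.adj_right ⟨i, j, p₀, hij, hQ i j, hi, hj⟩)
        (fun ⟨i, j, hij, hi, hj⟩ => c.not_adj_right ⟨i, j, p₀, hij, hQ i j, hi, hj⟩)
    · have hq : ∀ q q' : Q, q = q' := fun q q' =>
        c.eq_of_rel_right_of_no_edge hedge q q' (hQ q q')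
      exact ⟨fun _ => b, fun q q' _ => hq q q', fun q => ⟨t.refl _, hq q₀ q ▸ (hxb p₀).2⟩⟩
  refine c.omitted x y ⟨fun i _ j _ hij => hx hij, fun i _ j _ hij => hy hij,
    fun i _ j _ => iff_of_true (s.trans (s.symm (hxb i).1) (hxb j).1) (hP i j),
    fun i _ j _ => iff_of_true (t.trans (t.symm (hyb i).1) (hyb j).1) (hQ i j), fun p _ q _ => ?_⟩
  have e₁ := h.balanced (x p) (x p₀) b (y q) (s.trans (s.symm (hxb p).1) (hxb p₀).1) (hyb q).1
  have e₂ := c.balanced p p₀ q₀ q (hP _ _) (hQ _ _)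
  rw [(hxb p).2, (hxb p₀).2, (hyb q).2, ← e₂] at e₁
  tauto

theorem exists_transversal [Finite Q] {p : B → Prop} (h : (Quotient.mk t '' {b | p b}).Infinite) :
    ∃ y : Q → B, (∀ q q', t (y q) (y q') → q = q') ∧ ∀ q, p (y q) := by
  have : Infinite ↥(Quotient.mk t '' {b | p b}) := h.to_subtype
  obtain ⟨g⟩ := nonempty_embedding_of_finite_of_infinite Q ↥(Quotient.mk t '' {b | p b})
  choose y hy hyq using fun q => (g q).2
  refine ⟨y, fun q q' hqq' => g.injective (Subtype.ext ?_), hy⟩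
  rw [← hyq, ← hyq]
  exact Quotient.sound hqq'

/-- A complete bipartite pattern between a left clique and an independent right set. -/
theorem Tame.exists_complete (h : Tame s t E) (hT : HasTwoNbrs s E) [Finite P] [Nonempty P]
    [Finite Q] : ∃ (x : P → R) (y : Q → B), Function.Injective x ∧ (∀ p p', s (x p) (x p')) ∧
      (∀ q q', t (y q) (y q') → q = q') ∧ ∀ p q, E (x p) (y q) := by
  classical
  cases nonempty_fintype P
  obtain ⟨r, -⟩ := h.two_left
  obtain ⟨b, -⟩ := h.two_right
  have : Infinite {r' | s r r' ∧ E r' b} := (h.infinite_adj hT r b).to_subtype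
  obtain ⟨g⟩ := nonempty_embedding_of_finite_of_infinite P {r' | s r r' ∧ E r' b}
  have hs : ∀ p p', s (g p).1 (g p').1 := fun p p' => s.trans (s.symm (g p).2.1) (g p').2.1
  obtain ⟨y, hy, hy'⟩ := exists_transversal (Q := Q) (h.infinite_common hT
    (F := Finset.univ.image fun p => (g p).1) (Finset.univ_nonempty.image _)
    (by simpa using hs))
  exact ⟨fun p => (g p).1, y, fun p p' hp => g.injective (Subtype.ext hp), hs, hy,
    fun p q => hy' q _ (by simp)⟩

/-- Independent right vertices can be chosen with prescribed adjacency to a fixed left vertex. -/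
theorem Critical.exists_indep_pattern (c : Critical s t E sH tH EH) (h : Basic s t E)
    (hedge : ∃ b b', b ≠ b' ∧ t b b') (hQ : ∀ q q', tH q q' → q = q') (r : R) (p : Prop) :
    ∃ y : Q → B, (∀ q q', t (y q) (y q') → q = q') ∧ ∀ q, E r (y q) ↔ p := by
  obtain ⟨y₁, -, hy₁⟩ := c.right
  choose y hy hyr using fun q => h.flip.exists_iff hedge (y₁ q) r p
  exact ⟨y, fun q q' hq => hQ q q' ((hy₁ q q').1 (t.trans (hy q) (t.trans hq (t.symm (hy q'))))),
    hyr⟩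

/-- A clique of left vertices and an independent set of right vertices, all of which have the
same pattern as a given right vertex. -/
theorem Critical.exists_constant_pattern [Finite P] [Finite Q] (c : Critical s t E sH tH EH)
    (h : Tame s t E) (hP : ∀ i j, sH i j) (hQ : ∀ q q', tH q q' → q = q') (q₀ : Q) :
    ∃ (x : P → R) (y : Q → B), Function.Injective x ∧ (∀ p p', s (x p) (x p')) ∧
      (∀ q q', t (y q) (y q') → q = q') ∧ ∀ p q, E (x p) (y q) ↔ EH p q₀ := by
  have := c.nonempty_left
  by_cases hsub : Subsingleton P
  · obtain ⟨p₀⟩ := c.nonempty_left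
    obtain ⟨r, -⟩ := h.two_left
    obtain ⟨y, hy, hyr⟩ : ∃ y : Q → B, (∀ q q', t (y q) (y q') → q = q') ∧
        ∀ q, E r (y q) ↔ EH p₀ q₀ := by
      by_cases hedge : ∃ b b', b ≠ b' ∧ t b b'
      · exact c.exists_indep_pattern h.toBasic hedge hQ r _
      · have := h.infinite_quotient (Or.inr (eq_of_rel_of_no_edge hedge))
        by_cases he : EH p₀ q₀
        · simpa [he] using exists_transversal (Q := Q) (h.infinite_nbr r)
        · simpa [he] using exists_transversal (Q := Q) (h.compl.infinite_nbr r)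
    exact ⟨fun _ => r, y, fun p p' _ => Subsingleton.elim p p', fun _ _ => s.refl _, hy,
      fun p q => by rw [hyr, Subsingleton.elim p p₀]⟩
  by_cases hsplit : ∃ p p', EH p q₀ ∧ ¬ EH p' q₀
  · classical
    obtain ⟨p, p', hp, hp'⟩ := hsplit
    have hpp' : p ≠ p' := fun hc => hp' (hc ▸ hp)
    have hall : ∀ k, k ≠ p → k = p' := by
      intro k hk
      by_contra hk'
      exact hp' ((c.twins h.hom hpp' hk hk' (hP _ _) (hP _ _) q₀).1 hp)
    obtain ⟨r₁, r₂, hne, hs⟩ := h.edge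
    obtain ⟨y, hy, hyr⟩ : ∃ y : Q → B, (∀ q q', t (y q) (y q') → q = q') ∧
        ∀ q, E r₁ (y q) ∧ ¬ E r₂ (y q) := by
      by_cases hbig : HasTriangle s ∨ ¬ ∃ b b', b ≠ b' ∧ t b b'
      · have := h.infinite_quotient (hbig.imp id eq_of_rel_of_no_edge)
        exact exists_transversal (h.infinite_split hne hs)
      · obtain ⟨hT, hedge⟩ := not_or.1 hbig
        obtain ⟨y, hy, hyr⟩ := c.exists_indep_pattern h.toBasic (not_not.1 hedge) hQ r₁ True
        refine ⟨y, hy, fun q => ⟨(hyr q).2 trivial, fun hc => ?_⟩⟩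
        obtain ⟨z, hz, hzq⟩ := h.exists_not_adj h.edge r₁ (y q)
        exact hT ⟨r₁, r₂, z, hne, fun he => hzq (he ▸ (hyr q).2 trivial),
          fun he => hzq (he ▸ hc), hs, hz⟩
    refine ⟨fun k => if k = p then r₁ else r₂, y, fun k l hkl => ?_, fun k l => ?_, hy,
      fun k q => ?_⟩
    · by_cases hk : k = p <;> by_cases hl : l = p
      · rw [hk, hl]
      · exact (hne (by simpa [hk, hl] using hkl)).elim
      · exact (hne (by simpa [hk, hl] using hkl.symm)).elim
      · rw [hall k hk, hall l hl]
    · by_cases hk : k = p <;> by_cases hl : l = p <;> simp [hk, hl, hs, s.symm hs]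
    · by_cases hk : k = p
      · simp [hk, hp, (hyr q).1]
      · simp [hall k hk, hpp'.symm, hp', (hyr q).2]
  · rw [not_subsingleton_iff_nontrivial] at hsub
    obtain ⟨p, p', hpp'⟩ := hsub.exists_pair_ne
    have hconst : ∀ i j, EH i q₀ → EH j q₀ := by
      intro i j hi
      by_contra hj
      exact hsplit ⟨i, j, hi, hj⟩
    by_cases hp : EH p q₀
    · obtain ⟨x, y, hx, hs, hy, hxy⟩ := h.exists_complete (P := P) (Q := Q)
        (c.adj_left ⟨p, p', q₀, hpp', hP _ _, hp, hconst p p' hp⟩)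
      exact ⟨x, y, hx, hs, hy, fun i q => iff_of_true (hxy i q) (hconst p i hp)⟩
    · have hn : ∀ i, ¬ EH i q₀ := fun i hi => hp (hconst i p hi)
      obtain ⟨x, y, hx, hs, hy, hxy⟩ := h.compl.exists_complete (P := P) (Q := Q)
        (c.not_adj_left ⟨p, p', q₀, hpp', hP _ _, hp, hn p'⟩)
      exact ⟨x, y, hx, hs, hy, fun i q => iff_of_false (hxy i q) (hn i)⟩

/-- A critical structure does not consist of a left clique and an independent right set. -/
theorem Critical.not_clique_indep [Finite P] [Finite Q] (c : Critical s t E sH tH EH)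
    (h : Tame s t E) (hP : ∀ i j, sH i j) (hQ : ∀ q q', tH q q' → q = q') : False := by
  obtain ⟨p₀⟩ := c.nonempty_left
  obtain ⟨q₀⟩ := c.nonempty_right
  obtain ⟨x, y₀, hx, hs, hy₀, hxy₀⟩ := c.exists_constant_pattern h hP hQ q₀
  have hcol : ∀ q, ∃ b, t (y₀ q) b ∧ ∀ p, E (x p) b ↔ EH p q := by
    intro q
    by_cases hq : tH q q₀
    · exact ⟨y₀ q, t.refl _, fun p => by rw [hxy₀, hQ q q₀ hq]⟩
    by_cases hedge : ∃ b b', b ≠ b' ∧ t b b'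
    · obtain ⟨b, hb, hbp⟩ := (h.flip hedge).exists_iff hedge (y₀ q) (x p₀) (EH p₀ q)
      refine ⟨b, hb, fun p => ?_⟩
      have e₁ := h.balanced (x p) (x p₀) (y₀ q) b (hs _ _) hb
      have e₂ := c.column_agree h.hom h.balanced hq (hP p p₀)
      rw [hxy₀, hxy₀, hbp] at e₁
      tauto
    · exact ⟨y₀ q, t.refl _, fun p => by
        rw [hxy₀, c.column_eq h.hom (eq_of_rel_of_no_edge hedge) hq]⟩
  choose y hy hxy using hcol
  have hyt : ∀ q q', t (y q) (y q') → q = q' := fun q q' hq =>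
    hy₀ q q' (t.trans (hy q) (t.trans hq (t.symm (hy q'))))
  exact c.omitted x y ⟨fun i _ j _ hij => hx hij, fun i _ j _ hij => hyt i j (hij ▸ t.refl _),
    fun i _ j _ => iff_of_true (hs i j) (hP i j),
    fun i _ j _ => ⟨fun hij => hyt i j hij ▸ tH.refl _, fun hij => hQ i j hij ▸ t.refl _⟩,
    fun p _ q _ => hxy q p⟩

/-- A critical structure does not consist of an independent left set and a single right vertex. -/
theorem Critical.not_indep_single (c : Critical s t E sH tH EH) (h : Tame s t E)
    (hP : ∀ i j, sH i j → i = j) (hQ : ∀ q q' : Q, q = q') : False := by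
  obtain ⟨q₀⟩ := c.nonempty_right
  obtain ⟨b, -⟩ := h.two_right
  obtain ⟨x₁, -, hx₁⟩ := c.left
  choose x hx hxb using fun p => h.exists_iff h.edge (x₁ p) b (EH p q₀)
  have hxs : ∀ i j, s (x i) (x j) ↔ sH i j := fun i j => by
    rw [← hx₁]
    exact ⟨fun hij => s.trans (hx i) (s.trans hij (s.symm (hx j))),
      fun hij => s.trans (s.symm (hx i)) (s.trans hij (hx j))⟩
  exact c.omitted x (fun _ => b) ⟨fun i _ j _ hij => hP i j ((hxs i j).1 (hij ▸ s.refl _)),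
    fun i _ j _ _ => hQ i j, fun i _ j _ => hxs i j,
    fun i _ j _ => iff_of_true (t.refl _) (hQ i j ▸ tH.refl _),
    fun p _ q _ => by rw [hxb, hQ q q₀]⟩

/-- No color class of a critical structure is a clique. -/
theorem Critical.not_clique [Finite P] [Finite Q] (c : Critical s t E sH tH EH)
    (h : Tame s t E) : (¬ ∀ i j, sH i j) ∧ ¬ ∀ i j, tH i j := by
  by_cases hP : ∀ i j, sH i j
  · by_cases hQ : ∀ i j, tH i j
    · exact (c.not_two_cliques h hP hQ).elim
    · exact (c.not_clique_indep h hP (c.flip.eq_of_rel h.hom.flip hQ)).elim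
  · refine ⟨hP, fun hQ => ?_⟩
    have hP' := c.eq_of_rel h.hom hP
    by_cases hedge : ∃ b b', b ≠ b' ∧ t b b'
    · exact c.flip.not_clique_indep (h.flip hedge) hQ hP'
    · exact c.not_indep_single h hP' fun q q' =>
        c.eq_of_rel_right_of_no_edge hedge q q' (hQ q q')

/-- Both color classes of a critical structure are independent and have at least two vertices. -/
theorem Critical.independent [Finite P] [Finite Q] (c : Critical s t E sH tH EH)
    (h : Basic s t E) (hb : Balanced s t E)
    (hedge : (∃ r r', r ≠ r' ∧ s r r') ∨ ∃ b b', b ≠ b' ∧ t b b') :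
    ((∃ i j, ¬ sH i j) ∧ ∀ i j, sH i j → i = j) ∧ (∃ i j, ¬ tH i j) ∧ ∀ i j, tH i j → i = j := by
  have key : (¬ ∀ i j, sH i j) ∧ ¬ ∀ i j, tH i j := by
    rcases hedge with hedge | hedge
    · exact c.not_clique ⟨h, hedge, hb⟩
    · exact (c.flip.not_clique ⟨h.flip, hedge, hb.flip⟩).symm
  refine ⟨⟨?_, c.eq_of_rel h.hom key.1⟩, ?_, c.flip.eq_of_rel h.hom.flip key.2⟩
  · simpa using key.1
  · simpa using key.2

end CliquePair

/-! ### Translating 2-colored graphs -/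

section Translation

open CliquePair

variable {V W : Type}

/-- Lying in a common clique of a color class that is a disjoint union of cliques. -/
def cliqueSetoid (G : SimpleGraph V) (p : V → Prop) (h : IsUnionOfCliques G {v | p v}) :
    Setoid {v // p v} where
  r u v := u = v ∨ G.Adj u v
  iseqv := by
    refine ⟨fun u => Or.inl rfl, fun h => h.imp Eq.symm G.adj_symm, ?_⟩
    rintro u v w (rfl | huv) (rfl | hvw)
    · exact Or.inl rfl
    · exact Or.inr hvw
    · exact Or.inr huv
    · by_cases huw : u = w
      · exact Or.inl huw
      · exact Or.inr (h u u.2 v v.2 w w.2 huv hvw fun hc => huw (Subtype.ext hc))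

theorem cliqueSetoid_iff {G : SimpleGraph V} {p : V → Prop} {h : IsUnionOfCliques G {v | p v}}
    {u v : {v // p v}} : cliqueSetoid G p h u v ↔ u = v ∨ G.Adj u v := Iff.rfl

theorem adj_iff_cliqueSetoid {G : SimpleGraph V} {p : V → Prop}
    {h : IsUnionOfCliques G {v | p v}} {u v : {v // p v}} :
    G.Adj u v ↔ u ≠ v ∧ cliqueSetoid G p h u v := by
  rw [cliqueSetoid_iff]
  constructor
  · intro huv
    exact ⟨fun hc => G.irrefl (hc ▸ huv), Or.inr huv⟩
  · rintro ⟨hne, rfl | huv⟩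
    · exact (hne rfl).elim
    · exact huv

/-- The cross edges of a 2-colored graph. -/
def crossAdj (G : SimpleGraph V) (red : V → Prop) (r : {v // red v}) (b : {v // ¬ red v}) : Prop :=
  G.Adj r b

theorem Ultrahomogeneous.compl {G : SimpleGraph V} {red : V → Prop}
    (h : Ultrahomogeneous G red) : Ultrahomogeneous G (fun v => ¬ red v) := by
  intro S hS f hf
  obtain ⟨ψ, hψ, hf'⟩ := h S hS f ⟨hf.1, fun v hv => not_iff_not.1 (hf.2.1 v hv), hf.2.2⟩
  exact ⟨ψ, fun v => not_congr (hψ v), hf'⟩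

theorem Ultrahomogeneous.exists_extend {G : SimpleGraph V} {red : V → Prop}
    (h : Ultrahomogeneous G red) {ι : Type} [Finite ι] (g g' : ι → V)
    (heq : ∀ i j, g i = g j ↔ g' i = g' j) (hred : ∀ i, red (g' i) ↔ red (g i))
    (hadj : ∀ i j, G.Adj (g' i) (g' j) ↔ G.Adj (g i) (g j)) :
    ∃ ψ : G ≃g G, (∀ v, red (ψ v) ↔ red v) ∧ ∀ i, ψ (g i) = g' i := by
  have hext : ∀ i, Function.extend g g' id (g i) = g' i :=
    Function.FactorsThrough.extend_apply (fun i j hij => (heq i j).1 hij) id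
  obtain ⟨ψ, hψ, hg⟩ := h (Set.range g) (Set.finite_range g) (Function.extend g g' id) (by
    refine ⟨?_, ?_, ?_⟩
    · rintro _ ⟨i, rfl⟩ _ ⟨j, rfl⟩ hij
      rw [hext, hext] at hij
      exact (heq i j).2 hij
    · rintro _ ⟨i, rfl⟩
      rw [hext, hred]
    · rintro _ ⟨i, rfl⟩ _ ⟨j, rfl⟩
      rw [hext, hext, hadj])
  exact ⟨ψ, hψ, fun i => (hg _ ⟨i, rfl⟩).trans (hext i)⟩

theorem Ultrahomogeneous.homogeneous {G : SimpleGraph V} {red : V → Prop}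
    (h : Ultrahomogeneous G red) (hr : IsUnionOfCliques G {v | red v})
    (hb : IsUnionOfCliques G {v | ¬ red v}) :
    Homogeneous (cliqueSetoid G red hr) (cliqueSetoid G (fun v => ¬ red v) hb)
      (crossAdj G red) := by
  intro ι κ _ _ x x' y y' hxy
  have hne : ∀ (r : {v // red v}) (b : {v // ¬ red v}), r.1 ≠ b.1 := fun r b hc => b.2 (hc ▸ r.2)
  obtain ⟨ψ, hψ, hg⟩ := h.exists_extend (Sum.elim (fun i => (x i).1) fun j => (y j).1)
    (Sum.elim (fun i => (x' i).1) fun j => (y' j).1)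
    (by
      rintro (i | i) (j | j)
      · simpa [← Subtype.ext_iff] using hxy.eq_left i j
      · simp [hne]
      · simp [(hne _ _).symm]
      · simpa [← Subtype.ext_iff] using hxy.eq_right i j)
    (by
      rintro (i | i)
      · exact iff_of_true (x' i).2 (x i).2
      · exact iff_of_false (y' i).2 (y i).2)
    (by
      rintro (i | i) (j | j)
      · simp only [Sum.elim_inl, adj_iff_cliqueSetoid (h := hr), ne_eq, hxy.eq_left, hxy.rel_left]
      · exact (hxy.cross i j).symm
      · exact (G.adj_comm _ _).trans ((hxy.cross j i).symm.trans (G.adj_comm _ _))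
      · simp only [Sum.elim_inr, adj_iff_cliqueSetoid (h := hb), ne_eq, hxy.eq_right,
          hxy.rel_right])
  refine ⟨ψ.toEquiv.subtypeEquiv fun v => (hψ v).symm,
    ψ.toEquiv.subtypeEquiv fun v => not_congr (hψ v).symm, ⟨?_, ?_, ?_⟩,
    fun i => Subtype.ext (hg (Sum.inl i)), fun j => Subtype.ext (hg (Sum.inr j))⟩
  · intro u v
    rw [cliqueSetoid_iff, cliqueSetoid_iff, Equiv.apply_eq_iff_eq]
    exact or_congr_right ψ.map_rel_iff
  · intro u v
    rw [cliqueSetoid_iff, cliqueSetoid_iff, Equiv.apply_eq_iff_eq]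
    exact or_congr_right ψ.map_rel_iff
  · intro u v
    exact ψ.map_rel_iff

/-- An ultrahomogeneous graph with two adjacent twins in a color class is a blow-up. -/
theorem Ultrahomogeneous.isBlowUpOf [Countable V] {G : SimpleGraph V} {p : V → Prop}
    (h : Ultrahomogeneous G p) (hp : IsUnionOfCliques G {v | p v}) {r r' : V} (hr : p r)
    (hr' : p r') (hadj : G.Adj r r') (htwin : ∀ b, ¬ p b → (G.Adj r b ↔ G.Adj r' b)) :
    IsBlowUpOf G p := by
  have twins : ∀ v v', p v → p v' → (v = v' ∨ G.Adj v v') → ∀ b, ¬ p b →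
      (G.Adj v b ↔ G.Adj v' b) := by
    rintro v v' hv hv' (rfl | hvv') b hb
    · exact Iff.rfl
    obtain ⟨ψ, hψ, hg⟩ := h.exists_extend ![r, r'] ![v, v']
      (by simp [Fin.forall_fin_succ, hadj.ne, hadj.ne.symm, hvv'.ne, hvv'.ne.symm])
      (by simp [Fin.forall_fin_succ, *]) (by simp [Fin.forall_fin_succ, hadj, hvv', G.adj_symm])
    obtain ⟨b', rfl⟩ := ψ.surjective b
    have e₁ : ψ r = v := hg 0
    have e₂ : ψ r' = v' := hg 1
    rw [← e₁, ← e₂, ψ.map_adj_iff, ψ.map_adj_iff]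
    exact htwin b' fun hc => hb ((hψ b').2 hc)
  have move : ∀ v, ∃ ψ : G ≃g G, (∀ w, p (ψ w) ↔ p w) ∧ (p v → ψ r = v) := by
    intro v
    by_cases hv : p v
    · obtain ⟨ψ, hψ, hg⟩ := h.exists_extend (fun _ : Unit => r) (fun _ => v) (by simp)
        (by simp [hr, hv]) (by simp)
      exact ⟨ψ, hψ, fun _ => hg ()⟩
    · exact ⟨RelIso.refl _, fun _ => Iff.rfl, fun hc => (hv hc).elim⟩
  choose ψ hψ hψr using move
  let c : Setoid V :=
    { r := fun u v => u = v ∨ (p u ∧ p v ∧ G.Adj u v)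
      iseqv := by
        refine ⟨fun u => Or.inl rfl, fun h => h.imp Eq.symm fun h => ⟨h.2.1, h.1, h.2.2.symm⟩, ?_⟩
        rintro u v w (rfl | huv) (rfl | hvw)
        · exact Or.inl rfl
        · exact Or.inr hvw
        · exact Or.inr huv
        · by_cases huw : u = w
          · exact Or.inl huw
          · exact Or.inr ⟨huv.1, hvw.2.1, hp u huv.1 v huv.2.1 w hvw.2.1 huv.2.2 hvw.2.2 huw⟩ }
  have hc : ∀ {u v}, c u v ↔ u = v ∨ (p u ∧ p v ∧ G.Adj u v) := Iff.rfl
  let rep : V → V := fun v => (Quotient.mk c v).out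
  have hrep : ∀ v, c (rep v) v := fun v => Quotient.mk_out v
  have rep_eq : ∀ {u v}, c u v → rep u = rep v := fun huv =>
    congrArg Quotient.out (Quotient.sound huv)
  have rep_red : ∀ {v}, p v → p (rep v) := fun {v} hv =>
    (hc.1 (hrep v)).elim (fun he => by rwa [he]) fun h => h.1
  let U := {v : V // rep v = v}
  let I := {v : V // p v ∧ c r v}
  have hψI : ∀ (u : V) (i : I), p u → p (ψ u i) ∧ c u (ψ u i) := by
    intro u i hu
    have hi := (hψ u i).2 i.2.1
    refine ⟨hi, ?_⟩
    rcases hc.1 i.2.2 with he | ⟨-, -, he⟩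
    · exact hc.2 (Or.inl (by rw [← he, hψr u hu]))
    · exact hc.2 (Or.inr ⟨hu, hi, by rw [← (ψ u).map_adj_iff, hψr u hu] at he; exact he⟩)
  let g : {u : U // p u.1} × I ⊕ {u : U // ¬ p u.1} → V :=
    Sum.elim (fun a => ψ a.1.1.1 a.2) fun b => b.1.1
  have eq_of_rel : ∀ (u u' : {u : U // p u.1}), c u.1.1 u'.1.1 → u = u' := fun u u' huu' =>
    Subtype.ext (Subtype.ext (by rw [← u.1.2, ← u'.1.2, rep_eq huu']))
  have eq_of_img : ∀ (u u' : {u : U // p u.1}) (i i' : I),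
      c (ψ u.1.1 i) (ψ u'.1.1 i') → u = u' := fun u u' i i' hii' =>
    eq_of_rel u u' (c.trans (hψI _ i u.2).2 (c.trans hii' (c.symm (hψI _ i' u'.2).2)))
  have hginj : Function.Injective g := by
    rintro (⟨u, i⟩ | b) (⟨u', i'⟩ | b') hab
    · have hab' : ψ u.1.1 i = ψ u'.1.1 i' := hab
      obtain rfl := eq_of_img u u' i i' (hab' ▸ c.refl _)
      rw [Subtype.ext ((ψ _).injective hab')]
    · have hab' : ψ u.1.1 i = b'.1.1 := hab
      exact (b'.2 (hab' ▸ (hψI _ i u.2).1)).elim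
    · have hab' : b.1.1 = ψ u'.1.1 i' := hab
      exact (b.2 (hab' ▸ (hψI _ i' u'.2).1)).elim
    · rw [Subtype.ext (Subtype.ext hab)]
  have hgsurj : Function.Surjective g := by
    intro v
    by_cases hv : p v
    · have hpr := rep_red hv
      refine ⟨Sum.inl (⟨⟨rep v, rep_eq (hrep v)⟩, hpr⟩,
        ⟨(ψ (rep v)).symm v, ?_, ?_⟩), (ψ (rep v)).apply_symm_apply v⟩
      · rw [← hψ (rep v), (ψ (rep v)).apply_symm_apply]
        exact hv
      · rcases hc.1 (hrep v) with he | ⟨-, -, he⟩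
        · refine hc.2 (Or.inl ?_)
          apply (ψ (rep v)).injective
          rw [hψr _ hpr, (ψ (rep v)).apply_symm_apply, he]
        · refine hc.2 (Or.inr ⟨hr, ?_, ?_⟩)
          · rw [← hψ (rep v), (ψ (rep v)).apply_symm_apply]
            exact hv
          · rw [← (ψ (rep v)).map_adj_iff, hψr _ hpr, (ψ (rep v)).apply_symm_apply]
            exact he
    · refine ⟨Sum.inr ⟨⟨v, ?_⟩, hv⟩, rfl⟩
      exact (hc.1 (hrep v)).elim id fun he => (hv he.2.1).elim
  have hcross : ∀ (u : {u : U // p u.1}) (i : I) (b : {u : U // ¬ p u.1}),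
      G.Adj (ψ u.1.1 i) b.1.1 ↔ G.Adj u.1.1 b.1.1 := fun u i b =>
    (twins u.1.1 _ u.2 (hψI _ i u.2).1
      ((hc.1 (hψI _ i u.2).2).imp id fun h => h.2.2) _ b.2).symm
  have hadj' : ∀ a b, G.Adj (g a) (g b) ↔
      (blowUp (G.comap (Subtype.val : U → V)) (fun u => p u.1) I).Adj a b := by
    rintro (⟨u, i⟩ | b) (⟨u', i'⟩ | b')
    · have hred : ∀ u u' : {u : U // p u.1}, ¬ G.Adj u.1.1 u'.1.1 := fun u u' huu' =>
        huu'.ne (by rw [eq_of_rel u u' (hc.2 (Or.inr ⟨u.2, u'.2, huu'⟩))])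
      simp only [blowUp, SimpleGraph.fromRel_adj, SimpleGraph.comap_adj, hred, false_or]
      constructor
      · intro hab
        have hab' : G.Adj (ψ u.1.1 i) (ψ u'.1.1 i') := hab
        obtain rfl := eq_of_img u u' i i'
          (hc.2 (Or.inr ⟨(hψI _ i u.2).1, (hψI _ i' u'.2).1, hab'⟩))
        have hii' : i ≠ i' := fun he => hab'.ne (by rw [he])
        exact ⟨by simp [hii'], Or.inl ⟨rfl, hii'⟩⟩
      · have key : ∀ i i' : I, i ≠ i' → G.Adj (ψ u.1.1 i) (ψ u.1.1 i') := by
          intro i i' hii'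
          rw [(ψ u.1.1).map_adj_iff]
          rcases hc.1 (c.trans (c.symm i.2.2) i'.2.2) with he | he
          · exact (hii' (Subtype.ext he)).elim
          · exact he.2.2
        rintro ⟨-, ⟨rfl, hii'⟩ | ⟨rfl, hii'⟩⟩
        · exact key i i' hii'
        · exact key i i' hii'.symm
    · refine (hcross u i b').trans ?_
      simp [blowUp, G.adj_comm b'.1.1]
    · refine (G.adj_comm _ _).trans ((hcross u' i' b).trans ?_)
      simp [blowUp, G.adj_comm b.1.1]
    · have hne : G.Adj b.1.1 b'.1.1 → b ≠ b' := fun hbb' he => hbb'.ne (by rw [he])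
      change G.Adj b.1.1 b'.1.1 ↔ _
      simpa [blowUp, G.adj_comm b'.1.1] using hne
  refine ⟨U, G.comap Subtype.val, fun u => p u.1, I, fun u v hu hv huv => ?_, ?_, ?_,
    RelIso.symm ⟨Equiv.ofBijective g ⟨hginj, hgsurj⟩, fun {a b} => hadj' a b⟩, fun v => ?_⟩
  · exact huv.ne (congrArg Subtype.val
      (eq_of_rel ⟨u, hu⟩ ⟨v, hv⟩ (hc.2 (Or.inr ⟨hu, hv, huv⟩))))
  · exact Cardinal.two_le_iff.2 ⟨⟨r, hr, c.refl r⟩, ⟨r', hr', hc.2 (Or.inr ⟨hr, hr', hadj⟩)⟩,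
      fun he => hadj.ne (congrArg Subtype.val he)⟩
  · exact Cardinal.mk_le_aleph0
  · obtain ⟨a, rfl⟩ := hgsurj v
    have hcolor : p (g a) ↔ blowUpRed U (fun u => p u.1) I a := by
      rcases a with ⟨u, i⟩ | b
      · exact iff_of_true (hψI _ i u.2).1 trivial
      · exact iff_of_false b.2 id
    exact hcolor.trans (iff_of_eq (congrArg (blowUpRed U (fun u => p u.1) I)
      (Equiv.ofBijective_symm_apply_apply g ⟨hginj, hgsurj⟩ a).symm))

theorem IsBasicCUH.basic {G : SimpleGraph V} {red : V → Prop} (hG : IsBasicCUH G red)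
    (hr : IsUnionOfCliques G {v | red v}) (hb : IsUnionOfCliques G {v | ¬ red v}) :
    Basic (cliqueSetoid G red hr) (cliqueSetoid G (fun v => ¬ red v) hb) (crossAdj G red) := by
  obtain ⟨⟨hcount, hinf, hU, -, -⟩, hblow, ⟨u, v, hu, hv, huv, hadj⟩,
    u', v', hu', hv', huv', hadj'⟩ :=
    hG
  refine ⟨hU.homogeneous hr hb, ?_, ?_, ?_, ?_, ?_⟩
  · by_contra! hfin
    obtain ⟨h₁, h₂⟩ := hfin
    classical
    exact not_finite_iff_infinite.2 hinf (Finite.of_equiv _ (Equiv.sumCompl red))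
  · rintro r r' (rfl | hrr') htwin
    · rfl
    · exact (hblow (Or.inl (hU.isBlowUpOf hr r.2 r'.2 hrr' fun b hb => htwin ⟨b, hb⟩))).elim
  · rintro b b' (rfl | hbb') htwin
    · rfl
    · refine (hblow (Or.inr (hU.compl.isBlowUpOf hb b.2 b'.2 hbb' fun r hr => ?_))).elim
      rw [G.adj_comm, G.adj_comm b'.1]
      exact htwin ⟨r, not_not.1 hr⟩
  · exact ⟨⟨u, hu⟩, ⟨v, hv⟩, by simp [cliqueSetoid_iff, huv, hadj]⟩
  · exact ⟨⟨u', hu'⟩, ⟨v', hv'⟩, by simp [cliqueSetoid_iff, huv', hadj']⟩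

/-! ### The excluded small graphs -/

section Small

variable {G : SimpleGraph V} {red : V → Prop} (hr : IsUnionOfCliques G {v | red v})
  (hb : IsUnionOfCliques G {v | ¬ red v})

theorem injective_square {r r' b b' : V} (hr : red r) (hr' : red r') (hb : ¬ red b)
    (hb' : ¬ red b') (hrr' : r ≠ r') (hbb' : b ≠ b') :
    Function.Injective ![r, r', b, b'] := by
  have hne : ∀ {u v}, red u → ¬ red v → u ≠ v := fun hu hv hc => hv (hc ▸ hu)
  simp [Function.Injective, Fin.forall_fin_succ, hrr', hrr'.symm, hbb', hbb'.symm,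
    hne hr hb, hne hr hb', hne hr' hb, hne hr' hb', (hne hr hb).symm, (hne hr hb').symm,
    (hne hr' hb).symm, (hne hr' hb').symm]

theorem realizes_Dgraph_iff : Realizes G red Dgraph Dred ↔
    ¬ OmitsDiamond (cliqueSetoid G red hr) (cliqueSetoid G (fun v => ¬ red v) hb)
      (crossAdj G red) := by
  constructor
  · rintro ⟨f, -, hc, ha⟩ h
    have := h ⟨f 0, (hc 0).2 (by simp [Dred])⟩ ⟨f 1, (hc 1).2 (by simp [Dred])⟩
      ⟨f 2, fun h => by simpa [Dred] using (hc 2).1 h⟩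
      ⟨f 3, fun h => by simpa [Dred] using (hc 3).1 h⟩ (Or.inr ((ha 0 1).2 (by simp [Dgraph])))
      (Or.inr ((ha 2 3).2 (by simp [Dgraph]))) ((ha 0 2).2 (by simp [Dgraph]))
      ((ha 0 3).2 (by simp [Dgraph])) ((ha 1 2).2 (by simp [Dgraph]))
    simpa [Dgraph] using (ha 1 3).1 this
  · intro h
    simp only [OmitsDiamond, not_forall] at h
    obtain ⟨⟨r, hr⟩, ⟨r', hr'⟩, ⟨b, hb⟩, ⟨b', hb'⟩, hs, ht, h₁, h₂, h₃, h₄⟩ := h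
    rcases hs with hs | hs
    · exact (h₄ (hs ▸ h₂)).elim
    rcases ht with ht | ht
    · exact (h₄ (ht ▸ h₃)).elim
    simp only [crossAdj] at hs ht h₁ h₂ h₃ h₄
    refine ⟨![r, r', b, b'], injective_square hr hr' hb hb' hs.ne ht.ne, ?_, ?_⟩
    · simp [Fin.forall_fin_succ, Dred, *]
    · simp [Fin.forall_fin_succ, Dgraph, hs, ht, h₁, h₂, h₃, h₄, G.adj_comm r' r, G.adj_comm b,
        G.adj_comm b']

theorem realizes_Dtilde_iff : Realizes G red Dtilde Dred ↔
    ¬ OmitsDiamond (cliqueSetoid G red hr) (cliqueSetoid G (fun v => ¬ red v) hb)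
      (fun r b => ¬ crossAdj G red r b) := by
  constructor
  · rintro ⟨f, -, hc, ha⟩ h
    exact h ⟨f 0, (hc 0).2 (by simp [Dred])⟩ ⟨f 1, (hc 1).2 (by simp [Dred])⟩
      ⟨f 2, fun h => by simpa [Dred] using (hc 2).1 h⟩
      ⟨f 3, fun h => by simpa [Dred] using (hc 3).1 h⟩ (Or.inr ((ha 0 1).2 (by simp [Dtilde])))
      (Or.inr ((ha 2 3).2 (by simp [Dtilde]))) (fun h => by simpa [Dtilde] using (ha 0 2).1 h)
      (fun h => by simpa [Dtilde] using (ha 0 3).1 h)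
      (fun h => by simpa [Dtilde] using (ha 1 2).1 h) ((ha 1 3).2 (by simp [Dtilde]))
  · intro h
    simp only [OmitsDiamond, not_forall] at h
    obtain ⟨⟨r, hr⟩, ⟨r', hr'⟩, ⟨b, hb⟩, ⟨b', hb'⟩, hs, ht, h₁, h₂, h₃, h₄⟩ := h
    rcases hs with hs | hs
    · exact (h₄ (hs ▸ h₂)).elim
    rcases ht with ht | ht
    · exact (h₄ (ht ▸ h₃)).elim
    simp only [crossAdj, not_not] at hs ht h₁ h₂ h₃ h₄
    refine ⟨![r, r', b, b'], injective_square hr hr' hb hb' hs.ne ht.ne, ?_, ?_⟩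
    · simp [Fin.forall_fin_succ, Dred, *]
    · simp [Fin.forall_fin_succ, Dtilde, hs, ht, h₁, h₂, h₃, h₄, G.adj_comm r' r, G.adj_comm b,
        G.adj_comm b']

theorem realizes_Tr_iff : Realizes G red Tr TrRed ↔
    HasTwoNbrs (cliqueSetoid G red hr) (crossAdj G red) := by
  constructor
  · rintro ⟨f, hf, hc, ha⟩
    exact ⟨⟨f 0, (hc 0).2 (by simp [TrRed])⟩, ⟨f 1, (hc 1).2 (by simp [TrRed])⟩,
      ⟨f 2, fun h => by simpa [TrRed] using (hc 2).1 h⟩, by simp [hf.eq_iff],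
      Or.inr ((ha 0 1).2 (by simp [Tr])), ((ha 0 2).2 (by simp [Tr])),
      ((ha 1 2).2 (by simp [Tr]))⟩
  · rintro ⟨⟨r, hr⟩, ⟨r', hr'⟩, ⟨b, hb⟩, hne, hs, h₁, h₂⟩
    replace hs := hs.resolve_left hne
    simp only [crossAdj] at hs h₁ h₂
    have hrb : r ≠ b := fun hc => hb (hc ▸ hr)
    have hrb' : r' ≠ b := fun hc => hb (hc ▸ hr')
    refine ⟨![r, r', b], ?_, ?_, ?_⟩
    · simp [Function.Injective, Fin.forall_fin_succ, hs.ne, hs.ne.symm, hrb, hrb', hrb.symm,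
        hrb'.symm]
    · simp [Fin.forall_fin_succ, TrRed, *]
    · simp [Fin.forall_fin_succ, Tr, hs, h₁, h₂, G.adj_comm b, G.adj_comm r' r]

theorem realizes_TrTilde_iff : Realizes G red TrTilde TrRed ↔
    HasTwoNbrs (cliqueSetoid G red hr) (fun r b => ¬ crossAdj G red r b) := by
  constructor
  · rintro ⟨f, hf, hc, ha⟩
    exact ⟨⟨f 0, (hc 0).2 (by simp [TrRed])⟩, ⟨f 1, (hc 1).2 (by simp [TrRed])⟩,
      ⟨f 2, fun h => by simpa [TrRed] using (hc 2).1 h⟩, by simp [hf.eq_iff],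
      Or.inr ((ha 0 1).2 (by simp [TrTilde])), (fun h => by simpa [TrTilde] using (ha 0 2).1 h),
      (fun h => by simpa [TrTilde] using (ha 1 2).1 h)⟩
  · rintro ⟨⟨r, hr⟩, ⟨r', hr'⟩, ⟨b, hb⟩, hne, hs, h₁, h₂⟩
    replace hs := hs.resolve_left hne
    simp only [crossAdj] at hs h₁ h₂
    have hrb : r ≠ b := fun hc => hb (hc ▸ hr)
    have hrb' : r' ≠ b := fun hc => hb (hc ▸ hr')
    refine ⟨![r, r', b], ?_, ?_, ?_⟩
    · simp [Function.Injective, Fin.forall_fin_succ, hs.ne, hs.ne.symm, hrb, hrb', hrb.symm,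
        hrb'.symm]
    · simp [Fin.forall_fin_succ, TrRed, *]
    · simp [Fin.forall_fin_succ, TrTilde, hs, h₁, h₂, G.adj_comm b, G.adj_comm r' r]

theorem realizes_Tb_iff : Realizes G red Tb TbRed ↔
    HasTwoNbrs (cliqueSetoid G (fun v => ¬ red v) hb) (fun b r => crossAdj G red r b) := by
  constructor
  · rintro ⟨f, hf, hc, ha⟩
    exact ⟨⟨f 1, fun h => by simpa [TbRed] using (hc 1).1 h⟩,
      ⟨f 2, fun h => by simpa [TbRed] using (hc 2).1 h⟩, ⟨f 0, (hc 0).2 (by simp [TbRed])⟩,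
      by simp [hf.eq_iff], Or.inr ((ha 1 2).2 (by simp [Tb])), ((ha 0 1).2 (by simp [Tb])),
      ((ha 0 2).2 (by simp [Tb]))⟩
  · rintro ⟨⟨b, hb⟩, ⟨b', hb'⟩, ⟨r, hr⟩, hne, hs, h₁, h₂⟩
    replace hs := hs.resolve_left hne
    simp only [crossAdj] at hs h₁ h₂
    have hrb : r ≠ b := fun hc => hb (hc ▸ hr)
    have hrb' : r ≠ b' := fun hc => hb' (hc ▸ hr)
    refine ⟨![r, b, b'], ?_, ?_, ?_⟩
    · simp [Function.Injective, Fin.forall_fin_succ, hs.ne, hs.ne.symm, hrb, hrb', hrb.symm,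
        hrb'.symm]
    · simp [Fin.forall_fin_succ, TbRed, *]
    · simp [Fin.forall_fin_succ, Tb, hs, h₁, h₂, G.adj_comm b r, G.adj_comm b']

theorem realizes_TbTilde_iff : Realizes G red TbTilde TbRed ↔
    HasTwoNbrs (cliqueSetoid G (fun v => ¬ red v) hb) (fun b r => ¬ crossAdj G red r b) := by
  constructor
  · rintro ⟨f, hf, hc, ha⟩
    exact ⟨⟨f 1, fun h => by simpa [TbRed] using (hc 1).1 h⟩,
      ⟨f 2, fun h => by simpa [TbRed] using (hc 2).1 h⟩, ⟨f 0, (hc 0).2 (by simp [TbRed])⟩,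
      by simp [hf.eq_iff], Or.inr ((ha 1 2).2 (by simp [TbTilde])),
      (fun h => by simpa [TbTilde] using (ha 0 1).1 h),
      (fun h => by simpa [TbTilde] using (ha 0 2).1 h)⟩
  · rintro ⟨⟨b, hb⟩, ⟨b', hb'⟩, ⟨r, hr⟩, hne, hs, h₁, h₂⟩
    replace hs := hs.resolve_left hne
    simp only [crossAdj] at hs h₁ h₂
    have hrb : r ≠ b := fun hc => hb (hc ▸ hr)
    have hrb' : r ≠ b' := fun hc => hb' (hc ▸ hr)
    refine ⟨![r, b, b'], ?_, ?_, ?_⟩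
    · simp [Function.Injective, Fin.forall_fin_succ, hs.ne, hs.ne.symm, hrb, hrb', hrb.symm,
        hrb'.symm]
    · simp [Fin.forall_fin_succ, TbRed, *]
    · simp [Fin.forall_fin_succ, TbTilde, hs, h₁, h₂, G.adj_comm b r, G.adj_comm b']

end Small

/-! ### Minimally omitted subgraphs -/

section MinOmitted

variable {G : SimpleGraph V} {red : V → Prop} {H : SimpleGraph W} {redH : W → Prop}

theorem MinOmitted.realizes (h : MinOmitted G red H redH) {U : Type} {K : SimpleGraph U}
    {redK : U → Prop} (hn : ¬ ColoredIso H redH K redK) (hK : Realizes H redH K redK) :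
    Realizes G red K redK := by
  obtain ⟨g, hg, hc, ha⟩ := hK
  by_cases hS : Set.range g = Set.univ
  · have hbij : Function.Bijective g := ⟨hg, Set.range_eq_univ.1 hS⟩
    let e : K ≃g H := ⟨Equiv.ofBijective g hbij, fun {a b} => ha a b⟩
    refine (hn ⟨e.symm, fun v => ?_⟩).elim
    rw [← hc, show g (e.symm v) = v from e.apply_symm_apply v]
  · obtain ⟨f, hf, hcf, haf⟩ := h.2 (Set.range g) hS
    exact ⟨fun a => f ⟨g a, a, rfl⟩, fun a b hab => hg (congrArg Subtype.val (hf hab)),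
      fun a => (hcf _).trans (hc a), fun a b => (haf _ _).trans (ha a b)⟩

theorem MinOmitted.isUnionOfCliques (h : MinOmitted G red H redH) {p : W → Prop} {q : V → Prop}
    (hpq : ∀ (v : V) (w : W), (red v ↔ redH w) → (q v ↔ p w)) (hq : IsUnionOfCliques G {v | q v})
    (hp : ∃ w, ¬ p w) : IsUnionOfCliques H {w | p w} := by
  obtain ⟨f, hf, hc, ha⟩ := h.2 {w | p w} fun hS => by
    obtain ⟨w, hw⟩ := hp
    exact hw (Set.eq_univ_iff_forall.1 hS w)
  intro u hu v hv w hw huv hvw huw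
  have hqf : ∀ x, q (f x) := fun x => (hpq _ _ (hc x)).2 x.2
  exact (ha ⟨u, hu⟩ ⟨w, hw⟩).1 (hq _ (hqf _) _ (hqf _) _ (hqf _)
    ((ha ⟨u, hu⟩ ⟨v, hv⟩).2 huv) ((ha ⟨v, hv⟩ ⟨w, hw⟩).2 hvw)
    fun he => huw (congrArg Subtype.val (hf he)))

variable {hr : IsUnionOfCliques G {v | red v}} {hb : IsUnionOfCliques G {v | ¬ red v}}
  {hrH : IsUnionOfCliques H {w | redH w}} {hbH : IsUnionOfCliques H {w | ¬ redH w}}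

theorem Realizes.exists_embedsOn (hR : Nonempty {v // red v}) (hB : Nonempty {v // ¬ red v})
    {S : Set W} (hS : Realizes G red (H.induce S) (fun w => redH w.1)) :
    ∃ x y, EmbedsOn (cliqueSetoid G red hr) (cliqueSetoid G (fun v => ¬ red v) hb)
      (crossAdj G red) (cliqueSetoid H redH hrH) (cliqueSetoid H (fun w => ¬ redH w) hbH)
      (crossAdj H redH) {i | i.1 ∈ S} {j | j.1 ∈ S} x y := by
  classical
  obtain ⟨f, hf, hc, ha⟩ := hS
  have hxy : ∀ {p : W → Prop} {q : V → Prop} (_ : Nonempty {v // q v})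
      (_ : ∀ (v : V) (w : W), (red v ↔ redH w) → (q v ↔ p w)), ∃ x : {w // p w} → {v // q v},
      ∀ (i : {w // p w}) (hi : i.1 ∈ S), (x i).1 = f ⟨i, hi⟩ := by
    rintro p q ⟨v⟩ hpq
    refine ⟨fun i => if hi : i.1 ∈ S then ⟨f ⟨i, hi⟩, (hpq _ _ (hc ⟨i, hi⟩)).2 i.2⟩ else v,
      fun i hi => ?_⟩
    simp [hi]
  obtain ⟨x, hx⟩ := hxy (p := redH) (q := red) hR fun _ _ h => h
  obtain ⟨y, hy⟩ := hxy (p := fun w => ¬ redH w) (q := fun v => ¬ red v) hB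
    fun _ _ h => not_congr h
  have inj : ∀ {p : W → Prop} {q : V → Prop} (x : {w // p w} → {v // q v}),
      (∀ (i : {w // p w}) (hi : i.1 ∈ S), (x i).1 = f ⟨i, hi⟩) →
      ∀ i ∈ {i : {w // p w} | i.1 ∈ S}, ∀ j ∈ {i : {w // p w} | i.1 ∈ S}, x i = x j → i = j := by
    intro p q x hx i hi j hj hij
    have := congrArg Subtype.val hij
    rw [hx i hi, hx j hj] at this
    exact Subtype.ext (Subtype.mk.inj (hf this))
  have rel : ∀ {p : W → Prop} {q : V → Prop} {hp : IsUnionOfCliques H {w | p w}}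
      {hq : IsUnionOfCliques G {v | q v}} (x : {w // p w} → {v // q v}),
      (∀ (i : {w // p w}) (hi : i.1 ∈ S), (x i).1 = f ⟨i, hi⟩) →
      ∀ i ∈ {i : {w // p w} | i.1 ∈ S}, ∀ j ∈ {i : {w // p w} | i.1 ∈ S},
        (cliqueSetoid G q hq (x i) (x j) ↔ cliqueSetoid H p hp i j) := by
    intro p q hp hq x hx i hi j hj
    rw [cliqueSetoid_iff, cliqueSetoid_iff]
    refine or_congr ⟨inj x hx i hi j hj, fun hij => hij ▸ rfl⟩ ?_
    rw [hx i hi, hx j hj]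
    exact ha ⟨i, hi⟩ ⟨j, hj⟩
  refine ⟨x, y, inj x hx, inj y hy, rel x hx, rel y hy, fun i hi j hj => ?_⟩
  rw [crossAdj, hx i hi, hy j hj]
  exact ha ⟨i, hi⟩ ⟨j, hj⟩

theorem CliquePair.EmbedsOn.realizes {x : {w // redH w} → {v // red v}}
    {y : {w // ¬ redH w} → {v // ¬ red v}}
    (h : EmbedsOn (cliqueSetoid G red hr) (cliqueSetoid G (fun v => ¬ red v) hb)
      (crossAdj G red) (cliqueSetoid H redH hrH) (cliqueSetoid H (fun w => ¬ redH w) hbH)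
      (crossAdj H redH) Set.univ Set.univ x y) : Realizes G red H redH := by
  classical
  set f : W → V := fun w => if hw : redH w then x ⟨w, hw⟩ else y ⟨w, hw⟩ with hf
  have hfx : ∀ i : {w // redH w}, f i = x i := fun i => by simp [hf, i.2]
  have hfy : ∀ j : {w // ¬ redH w}, f j = y j := fun j => by simp [hf, j.2]
  have hcases : ∀ w, (∃ i : {w // redH w}, i.1 = w) ∨ ∃ j : {w // ¬ redH w}, j.1 = w := by
    intro w
    by_cases hw : redH w
    · exact Or.inl ⟨⟨w, hw⟩, rfl⟩
    · exact Or.inr ⟨⟨w, hw⟩, rfl⟩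
  have hxi : ∀ i j, x i = x j ↔ i = j := fun i j =>
    ⟨h.inj_left i trivial j trivial, fun hij => hij ▸ rfl⟩
  have hyi : ∀ i j, y i = y j ↔ i = j := fun i j =>
    ⟨h.inj_right i trivial j trivial, fun hij => hij ▸ rfl⟩
  have hcross : ∀ i j, G.Adj (x i) (y j) ↔ H.Adj i j := fun i j => h.cross i trivial j trivial
  refine ⟨f, fun u w huw => ?_, fun w => ?_, fun u w => ?_⟩
  · rcases hcases u with ⟨i, rfl⟩ | ⟨i, rfl⟩ <;> rcases hcases w with ⟨j, rfl⟩ | ⟨j, rfl⟩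
    · rw [hfx, hfx, ← Subtype.ext_iff, hxi] at huw
      rw [huw]
    · rw [hfx, hfy] at huw
      exact ((y j).2 (huw ▸ (x i).2)).elim
    · rw [hfx, hfy] at huw
      exact ((y i).2 (huw ▸ (x j).2)).elim
    · rw [hfy, hfy, ← Subtype.ext_iff, hyi] at huw
      rw [huw]
  · rcases hcases w with ⟨i, rfl⟩ | ⟨i, rfl⟩
    · rw [hfx]
      exact iff_of_true (x i).2 i.2
    · rw [hfy]
      exact iff_of_false (y i).2 i.2
  · rcases hcases u with ⟨i, rfl⟩ | ⟨i, rfl⟩ <;> rcases hcases w with ⟨j, rfl⟩ | ⟨j, rfl⟩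
    · rw [hfx, hfx, adj_iff_cliqueSetoid (h := hr), adj_iff_cliqueSetoid (h := hrH), ne_eq, hxi,
        h.rel_left i trivial j trivial]
    · rw [hfx, hfy, hcross]
    · rw [hfx, hfy, G.adj_comm, H.adj_comm, hcross]
    · rw [hfy, hfy, adj_iff_cliqueSetoid (h := hb), adj_iff_cliqueSetoid (h := hbH), ne_eq, hyi,
        h.rel_right i trivial j trivial]

theorem MinOmitted.critical (hmin : MinOmitted G red H redH)
    (hbal : Balanced (cliqueSetoid G red hr) (cliqueSetoid G (fun v => ¬ red v) hb)
      (crossAdj G red))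
    (hR : Nonempty {v // red v}) (hB : Nonempty {v // ¬ red v})
    (h1 : ∃ w, redH w) (h2 : ∃ w, ¬ redH w)
    (hn1 : ¬ ColoredIso H redH Tr TrRed) (hn2 : ¬ ColoredIso H redH TrTilde TrRed)
    (hn3 : ¬ ColoredIso H redH Tb TbRed) (hn4 : ¬ ColoredIso H redH TbTilde TbRed)
    (hn5 : ¬ ColoredIso H redH Dgraph Dred) (hn6 : ¬ ColoredIso H redH Dtilde Dred) :
    Critical (cliqueSetoid G red hr) (cliqueSetoid G (fun v => ¬ red v) hb)
      (crossAdj G red) (cliqueSetoid H redH hrH) (cliqueSetoid H (fun w => ¬ redH w) hbH)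
      (crossAdj H redH) where
  nonempty_left := by simpa using h1
  nonempty_right := by simpa using h2
  omitted x y hxy := hmin.1 hxy.realizes
  delete_left i := by
    obtain ⟨x, y, h⟩ := (hmin.2 {i.1}ᶜ (by simp [Set.eq_univ_iff_forall])).exists_embedsOn hR hB
      (hr := hr) (hb := hb) (hrH := hrH) (hbH := hbH)
    exact ⟨x, y, h.mono (fun j hj hc => hj (Subtype.ext hc)) fun j _ hc => j.2 (hc ▸ i.2)⟩
  delete_right j := by
    obtain ⟨x, y, h⟩ := (hmin.2 {j.1}ᶜ (by simp [Set.eq_univ_iff_forall])).exists_embedsOn hR hB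
      (hr := hr) (hb := hb) (hrH := hrH) (hbH := hbH)
    exact ⟨x, y, h.mono (fun i _ hc => j.2 (hc ▸ i.2)) fun i hi hc => hi (Subtype.ext hc)⟩
  left := by
    obtain ⟨x, y, h⟩ := (hmin.2 {w | redH w}
      (by simpa [Set.eq_univ_iff_forall] using h2)).exists_embedsOn hR hB
      (hr := hr) (hb := hb) (hrH := hrH) (hbH := hbH)
    exact ⟨x, fun i j => h.inj_left i i.2 j j.2, fun i j => h.rel_left i i.2 j j.2⟩
  right := by
    obtain ⟨x, y, h⟩ := (hmin.2 {w | ¬ redH w}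
      (by simpa [Set.eq_univ_iff_forall] using h1)).exists_embedsOn hR hB
      (hr := hr) (hb := hb) (hrH := hrH) (hbH := hbH)
    exact ⟨y, fun i j => h.inj_right i i.2 j j.2, fun i j => h.rel_right i i.2 j j.2⟩
  balanced := by
    refine balanced_of_omitsDiamond ?_ ?_
    · by_contra hc
      exact (realizes_Dgraph_iff hr hb).1
        (hmin.realizes hn5 ((realizes_Dgraph_iff hrH hbH).2 hc)) hbal.omitsDiamond
    · by_contra hc
      exact (realizes_Dtilde_iff hr hb).1
        (hmin.realizes hn6 ((realizes_Dtilde_iff hrH hbH).2 hc)) hbal.compl.omitsDiamond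
  adj_left h := (realizes_Tr_iff hr).1 (hmin.realizes hn1 ((realizes_Tr_iff hrH).2 h))
  not_adj_left h :=
    (realizes_TrTilde_iff hr).1 (hmin.realizes hn2 ((realizes_TrTilde_iff hrH).2 h))
  adj_right h := (realizes_Tb_iff hb).1 (hmin.realizes hn3 ((realizes_Tb_iff hbH).2 h))
  not_adj_right h :=
    (realizes_TbTilde_iff hb).1 (hmin.realizes hn4 ((realizes_TbTilde_iff hbH).2 h))

end MinOmitted

theorem two_le_card_of_exists_ne [Finite W] {p : W → Prop} (h : ∃ i j : {w // p w}, i ≠ j) :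
    2 ≤ Nat.card {w | p w} := by
  obtain ⟨i, j, hij⟩ := h
  have : Nontrivial {w | p w} := ⟨i, j, hij⟩
  exact Finite.one_lt_card

end Translation

/-- in a basic CUH graph omitting `D` with a non-independent color class,
every non-monochromatic minimally omitted subgraph not isomorphic to one of
`T_r, T̃_r, T_b, T̃_b, D, D̃` has both color classes independent of size at least 2. -/
theorem stmt_14 {V W : Type} [Fintype W] (G : SimpleGraph V) (red : V → Prop)
    (hG : IsBasicCUH G red)
    (hOmD : ¬ Realizes G red Dgraph Dred)
    (hni : (∃ u v, red u ∧ red v ∧ G.Adj u v) ∨ (∃ u v, ¬ red u ∧ ¬ red v ∧ G.Adj u v))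
    (H : SimpleGraph W) (redH : W → Prop)
    (hmin : MinOmitted G red H redH)
    (h1 : ∃ w, redH w) (h2 : ∃ w, ¬ redH w)
    (hn1 : ¬ ColoredIso H redH Tr TrRed) (hn2 : ¬ ColoredIso H redH TrTilde TrRed)
    (hn3 : ¬ ColoredIso H redH Tb TbRed) (hn4 : ¬ ColoredIso H redH TbTilde TbRed)
    (hn5 : ¬ ColoredIso H redH Dgraph Dred) (hn6 : ¬ ColoredIso H redH Dtilde Dred) :
    (2 ≤ Nat.card {w | redH w}) ∧ (∀ u v, redH u → redH v → ¬ H.Adj u v) ∧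
    (2 ≤ Nat.card {w | ¬ redH w}) ∧ (∀ u v, ¬ redH u → ¬ redH v → ¬ H.Adj u v) := by
  have hr := hG.1.2.2.2.1
  have hb := hG.1.2.2.2.2
  have hbasic := hG.basic hr hb
  have hbal := hbasic.balanced (not_not.1 fun hc => hOmD ((realizes_Dgraph_iff hr hb).2 hc))
  have hrH := hmin.isUnionOfCliques (p := redH) (fun _ _ h => h) hr h2
  have hbH := hmin.isUnionOfCliques (p := fun w => ¬ redH w) (fun _ _ h => not_congr h) hb
    (by simpa using h1)
  have hcrit := hmin.critical (hrH := hrH) (hbH := hbH) hbal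
    ⟨hbasic.two_left.choose⟩ ⟨hbasic.two_right.choose⟩ h1 h2 hn1 hn2 hn3 hn4 hn5 hn6
  obtain ⟨⟨⟨i, j, hij⟩, hP⟩, ⟨k, l, hkl⟩, hQ⟩ := hcrit.independent hbasic hbal (hni.imp
    (fun ⟨u, v, hu, hv, huv⟩ => ⟨⟨u, hu⟩, ⟨v, hv⟩, by simpa using huv.ne, Or.inr huv⟩)
    (fun ⟨u, v, hu, hv, huv⟩ => ⟨⟨u, hu⟩, ⟨v, hv⟩, by simpa using huv.ne, Or.inr huv⟩))
  refine ⟨two_le_card_of_exists_ne ⟨i, j, fun hc => hij (hc ▸ Setoid.refl' _ _)⟩,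
    fun u v hu hv huv => ?_,
    two_le_card_of_exists_ne ⟨k, l, fun hc => hkl (hc ▸ Setoid.refl' _ _)⟩,
    fun u v hu hv huv => ?_⟩
  · exact huv.ne (congrArg Subtype.val (hP ⟨u, hu⟩ ⟨v, hv⟩ (Or.inr huv)))
  · exact huv.ne (congrArg Subtype.val (hQ ⟨u, hu⟩ ⟨v, hv⟩ (Or.inr huv)))
end
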